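/- arXiv:math/0306404 — 3 statements merged into one kernel-verified Lean document; each statement's English description precedes it below -/
import Mathlib

section
/- Let M be a bounded self-adjoint operator, K = K* a compact self-adjoint operator, and (P_n) orthogonal projections with n-dimensional ranges L_n such that P_n x → x for all x. Then Σ(M) ∪ Spec_disc(M+K) = Σ(M+K) ∪ Spec_disc(M). In particular, Σ(M) and Σ(M+K) coincide outside the real axis. -/
open Filter Topology

noncomputable section

variable {H : Type*} [NormedAddCommGroup H] [InnerProductSpace ℂ H] [CompleteSpace H]

/-- `(M - z)²` as a linear map. -/
def sqz (M : H →ₗ[ℂ] H) (z : ℂ) : H →ₗ[ℂ] H :=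
  (M - z • LinearMap.id) ∘ₗ (M - z • LinearMap.id)

/-- `σ_n(z) = inf {‖P (M - z)² v‖ / ‖v‖ : 0 ≠ v ∈ ran P}`. -/
def sigma2 (M : H →ₗ[ℂ] H) (P : H →L[ℂ] H) (z : ℂ) : ℝ :=
  sInf {r : ℝ | ∃ v, v ∈ LinearMap.range (P : H →ₗ[ℂ] H) ∧ v ≠ 0 ∧ r = ‖P (sqz M z v)‖ / ‖v‖}

/-- The limiting set `Σ(T)` of the functions `σ_n` associated with `T`. -/
def SigmaSet (T : H →L[ℂ] H) (P : ℕ → H →L[ℂ] H) : Set ℂ :=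
  {z | Tendsto (fun n => sigma2 (T : H →ₗ[ℂ] H) (P n) z) atTop (𝓝 0)}

/-- The discrete spectrum of a bounded operator `T`:  the isolated points of the spectrum
that are eigenvalues of finite multiplicity. -/
def specDisc (T : H →L[ℂ] H) : Set ℂ :=
  {l | l ∈ spectrum ℂ T ∧ (∃ ε > 0, ∀ w ∈ spectrum ℂ T, w ≠ l → ε ≤ ‖w - l‖) ∧
    LinearMap.ker ((T : H →ₗ[ℂ] H) - l • LinearMap.id) ≠ ⊥ ∧
    FiniteDimensional ℂ ↥(LinearMap.ker ((T : H →ₗ[ℂ] H) - l • LinearMap.id))}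

/-!
Let `z ∈ Σ(T)`, witnessed by unit vectors `v_n ∈ L_n` with `P_n (T - z)² v_n → 0`.  As `P_n → 1`
strongly, `(T - z)² v_n` is weakly null.  If `z ∉ Spec(T)`, then `(T - z)²` is invertible, so `v_n`
is weakly null; the compact operator `(T + K - z)² - (T - z)²` sends it to a norm-null sequence, and
the same `v_n` witness `z ∈ Σ(T + K)`.

If `z ∈ Spec(T)` lies outside the discrete spectrum, then by Weyl's criterion `T` has a weakly null
sequence of unit approximate eigenvectors at `z`.  They are approximate eigenvectors of `T + K` too,
and `Σ(T + K)` contains every approximate eigenvalue of `T + K`.  Hence `Σ(T) \ Spec_disc(T)` is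
contained in `Σ(T + K)`, and the same holds with `T + K` and `-K` in place of `T` and `K`.
-/

section WeaklyNull

variable {𝕜 E F ι : Type*} [RCLike 𝕜]
  [NormedAddCommGroup E] [InnerProductSpace 𝕜 E] [NormedAddCommGroup F] [InnerProductSpace 𝕜 F]
  {l : Filter ι} {v : ι → E}

variable (𝕜) in
/-- Weak convergence of the family `v` to zero along the filter `l`, tested against vectors through
the inner product. -/
def IsWeaklyNull (l : Filter ι) (v : ι → E) : Prop :=
  ∀ u : E, Tendsto (fun i => inner 𝕜 u (v i)) l (𝓝 0)

theorem IsWeaklyNull.clm_apply [CompleteSpace E] [CompleteSpace F] (hv : IsWeaklyNull 𝕜 l v)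
    (A : E →L[𝕜] F) : IsWeaklyNull 𝕜 l fun i => A (v i) := fun u => by
  simpa only [A.adjoint_inner_left] using hv (A.adjoint u)

theorem IsWeaklyNull.tendsto_of_isCompactOperator [CompleteSpace E] [CompleteSpace F]
    (hv : IsWeaklyNull 𝕜 l v) {C : ℝ} (hC : ∀ᶠ i in l, ‖v i‖ ≤ C) {K : E →L[𝕜] F}
    (hK : IsCompactOperator K) : Tendsto (fun i => K (v i)) l (𝓝 0) := by
  have hcompact : IsCompact (closure (K '' Metric.closedBall 0 C)) :=
    IsCompactOperator.isCompact_closure_image_closedBall (f := (K : E →ₗ[𝕜] F)) hK C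
  refine hcompact.tendsto_nhds_of_unique_mapClusterPt ?_ fun y _ hy => ?_
  · filter_upwards [hC] with i hi
    exact subset_closure ⟨v i, by simpa using hi, rfl⟩
  · have hcluster : MapClusterPt (inner 𝕜 y y) l fun i => inner 𝕜 y (K (v i)) :=
      hy.continuousAt_comp (f := fun w => inner 𝕜 y w) (by fun_prop)
    have := hcluster.clusterPt.mono (hv.clm_apply K y)
    exact inner_self_eq_zero.1 (eq_of_nhds_neBot this)

theorem isWeaklyNull_of_orthonormal (hv : Orthonormal 𝕜 v) :
    IsWeaklyNull 𝕜 cofinite v := fun u => by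
  have hsq : Tendsto (fun i => ‖inner 𝕜 (v i) u‖ ^ 2) cofinite (𝓝 0) :=
    (hv.inner_products_summable u).tendsto_cofinite_zero
  refine tendsto_zero_iff_norm_tendsto_zero.2 ?_
  simpa [norm_inner_symm u] using hsq.sqrt

theorem tendsto_inner_zero_of_mem_closure {C : ℝ} (hC : ∀ i, ‖v i‖ ≤ C) {s : Set E}
    (hs : ∀ u ∈ s, Tendsto (fun i => inner 𝕜 u (v i)) l (𝓝 0)) {u : E} (hu : u ∈ closure s) :
    Tendsto (fun i => inner 𝕜 u (v i)) l (𝓝 0) := by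
  have hlip : ∀ i, LipschitzWith C.toNNReal fun w => inner 𝕜 w (v i) := fun i =>
    LipschitzWith.of_dist_le_mul fun w w' => by
      rw [dist_eq_norm, dist_eq_norm, ← inner_sub_left, mul_comm]
      exact (norm_inner_le_norm _ _).trans (by gcongr; exact (hC i).trans C.le_coe_toNNReal)
  exact ((LipschitzWith.uniformEquicontinuous _ _ hlip).equicontinuous u).tendsto_of_mem_closure
    tendsto_const_nhds hs hu

theorem isWeaklyNull_of_tendsto_apply_of_ker [CompleteSpace E] [CompleteSpace F] {C : ℝ}
    (hC : ∀ i, ‖v i‖ ≤ C) {A : E →L[𝕜] F} (hA : Tendsto (fun i => A (v i)) l (𝓝 0))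
    (hker : ∀ u ∈ A.ker, Tendsto (fun i => inner 𝕜 u (v i)) l (𝓝 0)) :
    IsWeaklyNull 𝕜 l v := fun u => by
  have : CompleteSpace A.ker := A.isClosed_ker.completeSpace_coe
  obtain ⟨a, ha, b, hb, rfl⟩ := A.ker.exists_add_mem_mem_orthogonal u
  rw [A.orthogonal_ker] at hb
  have hrange : ∀ w ∈ (A.adjoint.range : Set E),
      Tendsto (fun i => inner 𝕜 w (v i)) l (𝓝 0) := by
    rintro _ ⟨y, rfl⟩
    simpa [A.adjoint_inner_left] using tendsto_const_nhds (x := y).inner hA (𝕜 := 𝕜)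
  simpa only [inner_add_left, add_zero] using
    (hker a ha).add (tendsto_inner_zero_of_mem_closure hC hrange hb)

theorem isWeaklyNull_of_tendsto_apply [CompleteSpace E] {P : ι → E →L[𝕜] E}
    (hP : ∀ y, Tendsto (fun i => (P i).adjoint y) l (𝓝 y)) {C : ℝ} (hC : ∀ᶠ i in l, ‖v i‖ ≤ C)
    (h : Tendsto (fun i => P i (v i)) l (𝓝 0)) : IsWeaklyNull 𝕜 l v := fun u => by
  have hproj : Tendsto (fun i => inner 𝕜 u (P i (v i))) l (𝓝 0) := by
    simpa using tendsto_const_nhds (x := u).inner h (𝕜 := 𝕜)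
  have hbound : Tendsto (fun i => ‖u - (P i).adjoint u‖ * C) l (𝓝 0) := by
    simpa using ((hP u).const_sub u).norm.mul_const C
  have hdefect : Tendsto (fun i => inner 𝕜 (u - (P i).adjoint u) (v i)) l (𝓝 0) := by
    refine squeeze_zero_norm' ?_ hbound
    filter_upwards [hC] with i hi
    exact (norm_inner_le_norm _ _).trans (by gcongr)
  simpa [inner_sub_left, ContinuousLinearMap.adjoint_inner_left] using hdefect.add hproj

end WeaklyNull

section EssentialSpectrum

variable {𝕜 E : Type*} [RCLike 𝕜] [NormedAddCommGroup E] [InnerProductSpace 𝕜 E]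

/-- The essential spectrum in the sense of Weyl: the scalars `z` for which `T` has a singular
sequence, that is, a weakly null sequence of unit vectors on which `T - z` tends to zero. -/
def essSpec (T : E →L[𝕜] E) : Set 𝕜 :=
  {z | ∃ x : ℕ → E, (∀ n, ‖x n‖ = 1) ∧ IsWeaklyNull 𝕜 atTop x ∧
    Tendsto (fun n => (T - z • 1) (x n)) atTop (𝓝 0)}

theorem essSpec_subset_essSpec_add [CompleteSpace E] (T : E →L[𝕜] E) {K : E →L[𝕜] E}
    (hK : IsCompactOperator K) : essSpec T ⊆ essSpec (T + K) := by
  rintro z ⟨x, hx, hnull, hT⟩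
  refine ⟨x, hx, hnull, ?_⟩
  have hKx := hnull.tendsto_of_isCompactOperator (.of_forall fun n => (hx n).le) hK
  simpa [add_sub_right_comm] using hT.add hKx

theorem exists_orthonormal_nat (h : ¬FiniteDimensional 𝕜 E) : ∃ e : ℕ → E, Orthonormal 𝕜 e := by
  let b := Module.Basis.ofVectorSpace 𝕜 E
  have : Infinite (Module.Basis.ofVectorSpaceIndex 𝕜 E) :=
    not_finite_iff_infinite.1 fun _ => h (.of_basis b)
  have hli := b.linearIndependent.comp _ (Infinite.natEmbedding _).injective
  exact ⟨_, InnerProductSpace.gramSchmidtNormed_orthonormal hli⟩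

theorem mem_essSpec_of_infinite_ker {T : E →L[𝕜] E} {z : 𝕜}
    (h : ¬FiniteDimensional 𝕜 (T - z • 1).ker) : z ∈ essSpec T := by
  obtain ⟨e, he⟩ := exists_orthonormal_nat h
  have hc := he.comp_linearIsometry (T - z • 1).ker.subtypeₗᵢ
  refine ⟨fun n => e n, hc.1, ?_, ?_⟩
  · simpa only [Nat.cofinite_eq_atTop] using! isWeaklyNull_of_orthonormal hc
  · have hzero : ∀ n, (T - z • 1) (e n) = 0 := fun n => (e n).2
    simp only [hzero, tendsto_const_nhds]

theorem mem_spectrum_iff_not_isUnit_sub_smul_one {T : E →L[𝕜] E} {z : 𝕜} :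
    z ∈ spectrum 𝕜 T ↔ ¬IsUnit (T - z • 1) := by
  rw [spectrum.mem_iff, IsUnit.sub_iff, Algebra.algebraMap_eq_smul_one]

variable [CompleteSpace E]

theorem exists_norm_eq_one_norm_apply_lt {A : E →L[𝕜] E} (hA : IsStarNormal A)
    (hunit : ¬IsUnit A) {ε : ℝ} (hε : 0 < ε) : ∃ x, ‖x‖ = 1 ∧ ‖A x‖ < ε := by
  by_contra! hbelow
  have hanti : AntilipschitzWith (ε.toNNReal⁻¹) A :=
    antilipschitz_of_bound_of_norm_one (𝕜 := 𝕜) A fun x hx => by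
      rw [NNReal.coe_inv, Real.coe_toNNReal ε hε.le, inv_mul_eq_div, one_le_div hε]
      exact hbelow x hx
  refine hunit ?_
  rw [A.isUnit_iff_bijective, A.bijective_iff_dense_range_and_antilipschitz,
    Submodule.topologicalClosure_eq_top_iff, ContinuousLinearMap.IsStarNormal.orthogonal_range hA]
  exact ⟨LinearMap.ker_eq_bot.2 hanti.injective, _, hanti⟩

theorem isStarNormal_sub_smul_one {T : E →L[𝕜] E} (hT : IsStarNormal T) (z : 𝕜) :
    IsStarNormal (T - z • 1) :=
  Commute.isStarNormal_sub (by simpa using (Commute.one_right T).smul_right _)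

theorem exists_norm_eq_one_norm_sub_smul_lt {T : E →L[𝕜] E} (hT : IsStarNormal T) {z : 𝕜}
    (hz : z ∈ spectrum 𝕜 T) {ε : ℝ} (hε : 0 < ε) : ∃ x, ‖x‖ = 1 ∧ ‖(T - z • 1) x‖ < ε :=
  exists_norm_eq_one_norm_apply_lt (isStarNormal_sub_smul_one hT z)
    (mem_spectrum_iff_not_isUnit_sub_smul_one.1 hz) hε

theorem mem_essSpec_of_ker_eq_bot {T : E →L[𝕜] E} (hT : IsStarNormal T) {z : 𝕜}
    (hz : z ∈ spectrum 𝕜 T) (hker : (T - z • 1).ker = ⊥) : z ∈ essSpec T := by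
  choose x hx hlt using fun n : ℕ =>
    exists_norm_eq_one_norm_sub_smul_lt hT hz (Nat.one_div_pos_of_nat (α := ℝ) (n := n))
  have hAx : Tendsto (fun n => (T - z • 1) (x n)) atTop (𝓝 0) :=
    squeeze_zero_norm (fun n => (hlt n).le) tendsto_one_div_add_atTop_nhds_zero_nat
  refine ⟨x, hx, isWeaklyNull_of_tendsto_apply_of_ker (fun n => (hx n).le) hAx fun u hu => ?_, hAx⟩
  obtain rfl : u = 0 := by rwa [hker, Submodule.mem_bot] at hu
  simpa only [inner_zero_left] using tendsto_const_nhds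

theorem mem_essSpec_of_accPt {T : E →L[𝕜] E} (hT : IsStarNormal T) {z : 𝕜}
    (hz : AccPt z (𝓟 (spectrum 𝕜 T))) : z ∈ essSpec T := by
  rw [accPt_principal_iff_clusterPt, ← mem_closure_iff_clusterPt, mem_closure_iff_seq_limit] at hz
  obtain ⟨w, hw, hwz⟩ := hz
  set A := T - z • (1 : E →L[𝕜] E)
  have hne (n : ℕ) : w n - z ≠ 0 := sub_ne_zero.2 (hw n).2
  choose x hx hlt using fun n : ℕ =>
    exists_norm_eq_one_norm_sub_smul_lt hT (hw n).1
      (mul_pos (norm_pos_iff.2 (hne n)) (Nat.one_div_pos_of_nat (n := n)))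
  let y (n : ℕ) : E := (w n - z)⁻¹ • (T - w n • 1) (x n)
  have hy : Tendsto y atTop (𝓝 0) := by
    refine squeeze_zero_norm (fun n => ?_) (tendsto_one_div_add_atTop_nhds_zero_nat (𝕜 := ℝ))
    rw [norm_smul, norm_inv, inv_mul_le_iff₀ (norm_pos_iff.2 (hne n))]
    exact (hlt n).le
  have hA (n : ℕ) : A (x n) = (w n - z) • (x n + y n) := by
    rw [smul_add, smul_inv_smul₀ (hne n)]
    simp [A, sub_smul]
  have hAx : Tendsto (fun n => A (x n)) atTop (𝓝 0) := by
    have hscalar : Tendsto (fun n => w n - z) atTop (𝓝 0) := by simpa using hwz.sub_const z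
    have hx' : Tendsto (fun n => (w n - z) • x n) atTop (𝓝 0) := by
      rw [tendsto_zero_iff_norm_tendsto_zero]
      simpa [norm_smul, hx] using hscalar.norm
    simpa [hA, smul_add] using hx'.add (hscalar.smul hy)
  refine ⟨x, hx, isWeaklyNull_of_tendsto_apply_of_ker (fun n => (hx n).le) hAx fun u hu => ?_, hAx⟩
  -- `ker A = (ran A)ᗮ` by normality, so `x n + y n`, a multiple of `A (x n)`, is orthogonal to `u`.
  have horth (n : ℕ) : inner 𝕜 u (x n) = -inner 𝕜 u (y n) := by
    have hrange : u ∈ A.rangeᗮ := by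
      rwa [ContinuousLinearMap.IsStarNormal.orthogonal_range
        (isStarNormal_sub_smul_one hT z)]
    have : inner 𝕜 u (A (x n)) = 0 :=
      Submodule.inner_left_of_mem_orthogonal (LinearMap.mem_range_self _ (x n)) hrange
    rw [hA, inner_smul_right, mul_eq_zero_iff_left (hne n), inner_add_right] at this
    exact eq_neg_of_add_eq_zero_left this
  simpa [horth] using (tendsto_const_nhds (x := u).inner hy (𝕜 := 𝕜)).neg

end EssentialSpectrum

omit [CompleteSpace H] in
theorem mem_specDisc_iff {T : H →L[ℂ] H} {z : ℂ} :
    z ∈ specDisc T ↔ z ∈ spectrum ℂ T ∧ ¬AccPt z (𝓟 (spectrum ℂ T)) ∧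
      (T - z • 1).ker ≠ ⊥ ∧ FiniteDimensional ℂ (T - z • 1).ker := by
  rw [accPt_principal_iff_clusterPt, ← mem_closure_iff_clusterPt, Metric.mem_closure_iff]
  push Not
  simp only [specDisc, Set.mem_ofPred_eq, dist_comm z, dist_eq_norm, Set.mem_sdiff,
    Set.mem_singleton_iff, and_imp]
  rfl

theorem mem_essSpec_of_mem_spectrum_of_notMem_specDisc {T : H →L[ℂ] H} (hT : IsStarNormal T)
    {z : ℂ} (hz : z ∈ spectrum ℂ T) (hdisc : z ∉ specDisc T) : z ∈ essSpec T := by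
  by_cases hacc : AccPt z (𝓟 (spectrum ℂ T))
  · exact mem_essSpec_of_accPt hT hacc
  by_cases hker : (T - z • 1).ker = ⊥
  · exact mem_essSpec_of_ker_eq_bot hT hz hker
  · exact mem_essSpec_of_infinite_ker fun hfin => hdisc (mem_specDisc_iff.2 ⟨hz, hacc, hker, hfin⟩)

section SecondOrderSpectrum

section StrongLimit

variable {𝕜 E F : Type*} [RCLike 𝕜] [NormedAddCommGroup E] [NormedSpace 𝕜 E] [CompleteSpace E]
  [NormedAddCommGroup F] [NormedSpace 𝕜 F]

theorem exists_forall_norm_le_of_tendsto_apply {P : ℕ → E →L[𝕜] F} {L : E → F}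
    (hP : ∀ x, Tendsto (fun n => P n x) atTop (𝓝 (L x))) : ∃ C, ∀ n, ‖P n‖ ≤ C :=
  banach_steinhaus fun x => by
    simpa [bddAbove_def] using (hP x).norm.bddAbove_range

theorem tendsto_apply_of_tendsto {P : ℕ → E →L[𝕜] F} {L : E → F}
    (hP : ∀ x, Tendsto (fun n => P n x) atTop (𝓝 (L x))) {y : ℕ → E} {x : E}
    (hy : Tendsto y atTop (𝓝 x)) : Tendsto (fun n => P n (y n)) atTop (𝓝 (L x)) := by
  obtain ⟨C, hC⟩ := exists_forall_norm_le_of_tendsto_apply hP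
  have hbound : Tendsto (fun n => C * ‖y n - x‖) atTop (𝓝 0) := by
    simpa using (hy.sub_const x).norm.const_mul C
  have hdiff : Tendsto (fun n => P n (y n - x)) atTop (𝓝 0) :=
    squeeze_zero_norm (fun n => (P n).le_of_opNorm_le (hC n) _) hbound
  simpa using hdiff.add (hP x)

end StrongLimit

theorem isCompactOperator_sq_sub_sq {𝕜 E : Type*} [NontriviallyNormedField 𝕜]
    [NormedAddCommGroup E] [NormedSpace 𝕜 E] {A B : E →L[𝕜] E} (h : IsCompactOperator ⇑(A - B)) :
    IsCompactOperator ⇑(A ^ 2 - B ^ 2) := by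
  have hfactor : A ^ 2 - B ^ 2 = A * (A - B) + (A - B) * B := by noncomm_ring
  rw [hfactor]
  exact (h.clm_comp A).add (h.comp_clm B)

section

omit [CompleteSpace H]

theorem sqz_apply (T : H →L[ℂ] H) (z : ℂ) (v : H) :
    sqz (T : H →ₗ[ℂ] H) z v = ((T - z • 1 : H →L[ℂ] H) ^ 2) v := rfl

theorem continuous_sqz (T : H →L[ℂ] H) (z : ℂ) : Continuous (sqz (T : H →ₗ[ℂ] H) z) :=
  ((T - z • 1 : H →L[ℂ] H) ^ 2).continuous

theorem sigma2_nonneg (T : H →ₗ[ℂ] H) (P : H →L[ℂ] H) (z : ℂ) : 0 ≤ sigma2 T P z :=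
  Real.sInf_nonneg <| by rintro _ ⟨v, -, -, rfl⟩; positivity

theorem sigma2_le (T : H →ₗ[ℂ] H) {P : H →L[ℂ] H} (z : ℂ) {v : H}
    (hv : v ∈ LinearMap.range (P : H →ₗ[ℂ] H)) (hv0 : v ≠ 0) :
    sigma2 T P z ≤ ‖P (sqz T z v)‖ / ‖v‖ :=
  csInf_le ⟨0, by rintro _ ⟨v, -, -, rfl⟩; positivity⟩ ⟨v, hv, hv0, rfl⟩

theorem exists_norm_eq_one_of_sigma2_lt {T : H →ₗ[ℂ] H} {P : H →L[ℂ] H} {z : ℂ} {r : ℝ}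
    (hP : P ≠ 0) (h : sigma2 T P z < r) :
    ∃ v ∈ LinearMap.range (P : H →ₗ[ℂ] H), ‖v‖ = 1 ∧ ‖P (sqz T z v)‖ < r := by
  obtain ⟨u, hu⟩ := ContinuousLinearMap.exists_ne_zero hP
  obtain ⟨_, ⟨v, hv, hv0, rfl⟩, hlt⟩ :=
    exists_lt_of_csInf_lt (by exact ⟨_, P u, ⟨u, rfl⟩, hu, rfl⟩) h
  refine ⟨(‖v‖⁻¹ : ℂ) • v, Submodule.smul_mem _ _ hv, norm_smul_inv_norm hv0, ?_⟩
  simpa [norm_smul, inv_mul_eq_div] using hlt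

theorem mem_SigmaSet_iff_forall_eventually_lt {T : H →L[ℂ] H} {P : ℕ → H →L[ℂ] H} {z : ℂ} :
    z ∈ SigmaSet T P ↔ ∀ r > 0, ∀ᶠ n in atTop, sigma2 (T : H →ₗ[ℂ] H) (P n) z < r :=
  tendsto_order.trans <| and_iff_right fun _ hr =>
    .of_forall fun _ => hr.trans_le (sigma2_nonneg _ _ _)

theorem mem_SigmaSet_iff_exists_seq {T : H →L[ℂ] H} {P : ℕ → H →L[ℂ] H}
    (hP : ∀ᶠ n in atTop, P n ≠ 0) {z : ℂ} :
    z ∈ SigmaSet T P ↔ ∃ v : ℕ → H,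
      (∀ᶠ n in atTop, v n ∈ LinearMap.range (P n : H →ₗ[ℂ] H) ∧ ‖v n‖ = 1) ∧
      Tendsto (fun n => P n (sqz (T : H →ₗ[ℂ] H) z (v n))) atTop (𝓝 0) := by
  constructor
  · intro hz
    have hnear : ∀ᶠ n in atTop, ∃ v, v ∈ LinearMap.range (P n : H →ₗ[ℂ] H) ∧ ‖v‖ = 1 ∧
        ‖P n (sqz (T : H →ₗ[ℂ] H) z v)‖ < sigma2 (T : H →ₗ[ℂ] H) (P n) z + 1 / ((n : ℝ) + 1) := by
      filter_upwards [hP] with n hn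
      exact exists_norm_eq_one_of_sigma2_lt hn (lt_add_of_pos_right _ Nat.one_div_pos_of_nat)
    obtain ⟨v, hv⟩ := hnear.choice
    refine ⟨v, hv.mono fun n hn => ⟨hn.1, hn.2.1⟩,
      squeeze_zero_norm' (hv.mono fun n hn => hn.2.2.le) ?_⟩
    simpa using! Tendsto.add hz tendsto_one_div_add_atTop_nhds_zero_nat
  · rintro ⟨v, hv, hlim⟩
    refine squeeze_zero' (.of_forall fun n => sigma2_nonneg _ _ _) ?_ (by simpa using hlim.norm)
    filter_upwards [hv] with n ⟨hmem, hnorm⟩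
    simpa [hnorm] using sigma2_le (T : H →ₗ[ℂ] H) z hmem (norm_ne_zero_iff.1 (by simp [hnorm]))

theorem eventually_ne_zero_of_tendsto_apply [Nontrivial H] {P : ℕ → H →L[ℂ] H}
    (hP : ∀ x, Tendsto (fun n => P n x) atTop (𝓝 x)) : ∀ᶠ n in atTop, P n ≠ 0 := by
  obtain ⟨x, hx⟩ := exists_ne (0 : H)
  filter_upwards [(hP x).eventually_ne hx] with n hn h
  simp [h] at hn

end

section

variable {T : H →L[ℂ] H} {P : ℕ → H →L[ℂ] H} {z : ℂ}

theorem mem_SigmaSet_of_forall_exists (hP : ∀ x, Tendsto (fun n => P n x) atTop (𝓝 x))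
    (h : ∀ r > 0, ∃ x ≠ 0, ‖sqz (T : H →ₗ[ℂ] H) z x‖ < r * ‖x‖) : z ∈ SigmaSet T P := by
  refine mem_SigmaSet_iff_forall_eventually_lt.2 fun r hr => ?_
  obtain ⟨x, hx, hlt⟩ := h r hr
  have hnum : Tendsto (fun n => P n (sqz (T : H →ₗ[ℂ] H) z (P n x))) atTop
      (𝓝 (sqz (T : H →ₗ[ℂ] H) z x)) :=
    tendsto_apply_of_tendsto (L := id) hP (((continuous_sqz T z).tendsto x).comp (hP x))
  have hratio := hnum.norm.div (hP x).norm (norm_ne_zero_iff.2 hx)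
  filter_upwards [hratio.eventually_lt_const ((div_lt_iff₀ (norm_pos_iff.2 hx)).2 hlt),
    (hP x).eventually_ne hx] with n hn hne
  exact (sigma2_le _ z ⟨x, rfl⟩ hne).trans_lt hn

theorem essSpec_subset_SigmaSet (hP : ∀ x, Tendsto (fun n => P n x) atTop (𝓝 x)) :
    essSpec T ⊆ SigmaSet T P := by
  rintro z ⟨x, hx, -, hlim⟩
  refine mem_SigmaSet_of_forall_exists hP fun r hr => ?_
  have hsq : Tendsto (fun n => sqz (T : H →ₗ[ℂ] H) z (x n)) atTop (𝓝 0) :=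
    ((T - z • 1 : H →L[ℂ] H).continuous.tendsto' 0 0 (map_zero _)).comp hlim
  obtain ⟨n, hn⟩ := (hsq.norm.eventually_lt_const (by simpa using hr)).exists
  exact ⟨x n, norm_ne_zero_iff.1 (by simp [hx n]), by simpa [hx n] using hn⟩

theorem specDisc_subset_SigmaSet (hP : ∀ x, Tendsto (fun n => P n x) atTop (𝓝 x)) :
    specDisc T ⊆ SigmaSet T P := by
  rintro z ⟨-, -, hker, -⟩
  obtain ⟨v, hv, hv0⟩ := (Submodule.ne_bot_iff _).1 hker
  refine mem_SigmaSet_of_forall_exists hP fun r hr => ⟨v, hv0, ?_⟩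
  rw [sqz, LinearMap.comp_apply, LinearMap.mem_ker.1 hv, map_zero, norm_zero]
  positivity

variable [Nontrivial H] (hP : ∀ x, Tendsto (fun n => P n x) atTop (𝓝 x))
  (hPadj : ∀ x, Tendsto (fun n => (P n).adjoint x) atTop (𝓝 x))
include hP hPadj

theorem mem_SigmaSet_add_of_notMem_spectrum {K : H →L[ℂ] H} (hK : IsCompactOperator K)
    (hz : z ∈ SigmaSet T P) (hspec : z ∉ spectrum ℂ T) : z ∈ SigmaSet (T + K) P := by
  have hne := eventually_ne_zero_of_tendsto_apply hP
  obtain ⟨v, hv, hlim⟩ := (mem_SigmaSet_iff_exists_seq hne).1 hz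
  refine (mem_SigmaSet_iff_exists_seq hne).2 ⟨v, hv, ?_⟩
  simp only [sqz_apply] at hlim ⊢
  set A : H →L[ℂ] H := T - z • 1
  set B : H →L[ℂ] H := T + K - z • 1
  have hbdd : ∀ᶠ n in atTop, ‖v n‖ ≤ 1 := hv.mono fun n hn => hn.2.le
  have hA : IsUnit (A ^ 2) :=
    (not_not.1 (mt mem_spectrum_iff_not_isUnit_sub_smul_one.2 hspec)).pow 2
  have hnull : IsWeaklyNull ℂ atTop v := by
    have himage : IsWeaklyNull ℂ atTop fun n => (A ^ 2) (v n) :=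
      isWeaklyNull_of_tendsto_apply hPadj
        (hbdd.mono fun n hn => (A ^ 2).le_opNorm_of_le hn) hlim
    obtain ⟨R, hR⟩ := hA.exists_left_inv
    have hcancel : ∀ x, R ((A ^ 2) x) = x := DFunLike.congr_fun hR
    simpa only [hcancel] using himage.clm_apply R
  have hcompact : IsCompactOperator ⇑(B ^ 2 - A ^ 2) :=
    isCompactOperator_sq_sub_sq (by simpa [A, B] using hK)
  have hpert : Tendsto (fun n => P n ((B ^ 2 - A ^ 2) (v n))) atTop (𝓝 0) :=
    tendsto_apply_of_tendsto (L := id) hP (hnull.tendsto_of_isCompactOperator hbdd hcompact)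
  simpa using hlim.add hpert

theorem SigmaSet_sdiff_specDisc_subset {K : H →L[ℂ] H} (hT : IsStarNormal T)
    (hK : IsCompactOperator K) : SigmaSet T P \ specDisc T ⊆ SigmaSet (T + K) P := by
  rintro z ⟨hz, hdisc⟩
  by_cases hspec : z ∈ spectrum ℂ T
  · exact essSpec_subset_SigmaSet hP <| essSpec_subset_essSpec_add T hK <|
      mem_essSpec_of_mem_spectrum_of_notMem_specDisc hT hspec hdisc
  · exact mem_SigmaSet_add_of_notMem_spectrum hP hPadj hK hz hspec

end

end SecondOrderSpectrum

theorem notMem_specDisc_of_im_ne_zero {T : H →L[ℂ] H} (hT : IsSelfAdjoint T) {z : ℂ}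
    (hz : z.im ≠ 0) : z ∉ specDisc T := fun h =>
  hz (hT.im_eq_zero_of_mem_spectrum h.1)

theorem SigmaSet_compact_perturbation_general [Nontrivial H]
    (M : H →L[ℂ] H) (hM : IsStarNormal M)
    (K : H →L[ℂ] H) (hMK : IsStarNormal (M + K)) (hK : IsCompactOperator K)
    (P : ℕ → H →L[ℂ] H)
    (hP : ∀ x, Tendsto (fun n => P n x) atTop (𝓝 x))
    (hPadj : ∀ x, Tendsto (fun n => (P n).adjoint x) atTop (𝓝 x)) :
    SigmaSet M P ∪ specDisc (M + K) = SigmaSet (M + K) P ∪ specDisc M ∧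
    ∀ z, z ∉ specDisc M → z ∉ specDisc (M + K) →
      (z ∈ SigmaSet M P ↔ z ∈ SigmaSet (M + K) P) := by
  have hadd : SigmaSet M P \ specDisc M ⊆ SigmaSet (M + K) P :=
    SigmaSet_sdiff_specDisc_subset hP hPadj hM hK
  have hsub : SigmaSet (M + K) P \ specDisc (M + K) ⊆ SigmaSet M P := by
    simpa only [add_neg_cancel_right] using
      SigmaSet_sdiff_specDisc_subset (K := -K) hP hPadj hMK hK.neg
  rw [Set.sdiff_subset_iff, Set.union_comm] at hadd hsub
  have heq : SigmaSet M P ∪ specDisc (M + K) = SigmaSet (M + K) P ∪ specDisc M :=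
    (Set.union_subset hadd ((specDisc_subset_SigmaSet hP).trans Set.subset_union_left)).antisymm
      (Set.union_subset hsub ((specDisc_subset_SigmaSet hP).trans Set.subset_union_left))
  exact ⟨heq, fun z hz hz' => by simpa [hz, hz'] using Set.ext_iff.1 heq z⟩

/-- For a bounded self-adjoint `M` and a compact self-adjoint perturbation `K`,
`Σ(M) ∪ Spec_disc(M+K) = Σ(M+K) ∪ Spec_disc(M)`; in particular `Σ(M)` and `Σ(M+K)`
coincide outside the real axis. -/
theorem SigmaSet_compact_perturbation
    (M : H →L[ℂ] H) (hM : IsSelfAdjoint M)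
    (K : H →L[ℂ] H) (hK : IsSelfAdjoint K) (hKcomp : IsCompactOperator ⇑K)
    (P : ℕ → H →L[ℂ] H)
    (hPsa : ∀ n, IsSelfAdjoint (P n))
    (hPidem : ∀ n, IsIdempotentElem (P n))
    (hPfin : ∀ n, FiniteDimensional ℂ (LinearMap.range (P n : H →ₗ[ℂ] H)))
    (hPdim : ∀ n, Module.finrank ℂ (LinearMap.range (P n : H →ₗ[ℂ] H)) = n)
    (hPlim : ∀ x : H, Tendsto (fun n => P n x) atTop (𝓝 x)) :
    SigmaSet M P ∪ specDisc (M + K) = SigmaSet (M + K) P ∪ specDisc M ∧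
    ∀ z : ℂ, z.im ≠ 0 → (z ∈ SigmaSet M P ↔ z ∈ SigmaSet (M + K) P) := by
  have : Nontrivial (LinearMap.range (P 1 : H →ₗ[ℂ] H)) :=
    Module.nontrivial_of_finrank_pos (R := ℂ) (by simp [hPdim])
  have : Nontrivial H := (Submodule.subtype_injective (P 1 : H →ₗ[ℂ] H).range).nontrivial
  have hMK : IsSelfAdjoint (M + K) := hM.add hK
  obtain ⟨hunion, hiff⟩ := SigmaSet_compact_perturbation_general M hM.isStarNormal K
    hMK.isStarNormal hKcomp P hPlim fun x => by simpa only [(hPsa _).adjoint_eq] using hPlim x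
  exact ⟨hunion, fun z hz => hiff z (notMem_specDisc_of_im_ne_zero hM hz)
    (notMem_specDisc_of_im_ne_zero hMK hz)⟩

end
end

section
/- Let H be a bounded self-adjoint operator with Spec H = Spec_ess H, let ψ be a unit vector, a > 0, and K := a⟨·, ψ⟩ψ. Then every isolated eigenvalue λ of H + K of finite multiplicity is non-degenerate (has multiplicity one), and for λ ∉ Spec H one has: λ is an eigenvalue of H + K if and only if ⟨(λ − H)^{-1}ψ, ψ⟩ = a^{-1}. -/
open Filter Topology

noncomputable section

variable {H : Type*} [NormedAddCommGroup H] [InnerProductSpace ℂ H] [CompleteSpace H]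

/-!
Write `B = T - l` for a normal operator `T`. By the spectral theorem `l` is not an accumulation
point of the spectrum of `T` exactly when `B * G * B = B` for some bounded `G`; if moreover `ker B`
is finite-dimensional, such a `G` commuting with `B` inverts `B` modulo finite rank. Hence
`l` lies in the discrete spectrum of `T` iff `B` is Fredholm and not injective. Being Fredholm
is insensitive to the perturbation `q ⊗ ψ`, while an eigenvector `φ` of `A + q ⊗ ψ` with
`q φ = 0` is also an eigenvector of `A`. So if `l` is in the discrete spectrum of
`A + q ⊗ ψ` but not of `A`, then `q` is injective on the eigenspace.
-/

section CStar

lemma eq_zero_of_norm_star_mul_le {A : Type*} [NonUnitalNormedRing A] [StarRing A] [CStarRing A]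
    {b c : A} {k : ℝ} (hcb : c * b = b) (hk : ‖star b * c‖ ≤ k * ‖b‖) (hk_lt : k < 1) : b = 0 := by
  have hb : ‖b‖ * ‖b‖ ≤ k * (‖b‖ * ‖b‖) :=
    calc ‖b‖ * ‖b‖ = ‖star b * c * b‖ := by rw [mul_assoc, hcb, CStarRing.norm_star_mul_self]
      _ ≤ ‖star b * c‖ * ‖b‖ := norm_mul_le ..
      _ ≤ k * ‖b‖ * ‖b‖ := by gcongr
      _ = k * (‖b‖ * ‖b‖) := mul_assoc ..
  by_contra hne
  exact (mul_lt_of_lt_one_left (mul_self_pos.2 (norm_ne_zero_iff.2 hne)) hk_lt).not_ge hb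

variable {A : Type*} [CStarAlgebra A] {a : A} {l : ℂ}

lemma cfc_sub_const_eq_sub_algebraMap (ha : IsStarNormal a) (l : ℂ) :
    cfc (fun z => z - l) a = a - algebraMap ℂ A l := by
  rw [cfc_sub (fun z => z) (fun _ => l) a, cfc_id' ℂ a, cfc_const l a]

lemma continuousOn_inv_sub_of_isolated {s : Set ℂ} {ε : ℝ} (hε : 0 < ε)
    (hs : ∀ w ∈ s, w ≠ l → ε ≤ ‖w - l‖) : ContinuousOn (fun z => (z - l)⁻¹) s := by
  have hclosed : IsClosed {z : ℂ | ε ≤ ‖z - l‖} := isClosed_le (by fun_prop) (by fun_prop)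
  have hinv : ContinuousOn (fun z => (z - l)⁻¹) {z : ℂ | ε ≤ ‖z - l‖} :=
    (continuousOn_id.sub continuousOn_const).inv₀ fun z hz => norm_pos_iff.1 (hε.trans_le hz)
  refine ((continuousOn_singleton _ l).union_of_isClosed hinv isClosed_singleton hclosed).mono
    fun w hw => ?_
  exact or_iff_not_imp_left.2 (hs w hw)

lemma exists_commute_mul_mul_self_of_isolated (ha : IsStarNormal a)
    (hl : ∃ ε > 0, ∀ w ∈ spectrum ℂ a, w ≠ l → ε ≤ ‖w - l‖) :
    ∃ g, Commute g (a - algebraMap ℂ A l) ∧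
      (a - algebraMap ℂ A l) * g * (a - algebraMap ℂ A l) = a - algebraMap ℂ A l := by
  obtain ⟨ε, hε, hs⟩ := hl
  have hinv : ContinuousOn (fun z => (z - l)⁻¹) (spectrum ℂ a) :=
    continuousOn_inv_sub_of_isolated hε hs
  -- Because `0⁻¹ = 0`, the identity `x * x⁻¹ * x = x` needs no exception at `z = l`.
  refine ⟨cfc (fun z => (z - l)⁻¹) a, ?_, ?_⟩ <;> rw [← cfc_sub_const_eq_sub_algebraMap ha l]
  · exact cfc_commute_cfc _ _ a
  · rw [← cfc_mul .., ← cfc_mul ..]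
    exact cfc_congr fun z _ => mul_inv_mul_cancel (z - l)

lemma isolated_of_mul_mul_self (ha : IsStarNormal a) {g : A}
    (hg : (a - algebraMap ℂ A l) * g * (a - algebraMap ℂ A l) = a - algebraMap ℂ A l) :
    ∃ ε > 0, ∀ w ∈ spectrum ℂ a, w ≠ l → ε ≤ ‖w - l‖ := by
  obtain ⟨r, hr, hgr⟩ := exists_pos_mul_lt one_pos ‖g‖
  -- `f` lives on the disc of radius `r` about `l`. There `a - l` is smaller than `r`, whereas `g`
  -- inverts it away from `l`: as `r * ‖g‖ < 1`, the disc can meet the spectrum only in its center.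
  let h : ℂ → ℂ := fun z => (max 0 (r - ‖z - l‖) : ℝ)
  let f : ℂ → ℂ := fun z => (z - l) * h z
  have hh : Continuous h := by fun_prop
  have hf : Continuous f := by fun_prop
  have hgf : (a - algebraMap ℂ A l) * g * cfc f a = cfc f a := by
    have : cfc f a = (a - algebraMap ℂ A l) * cfc h a := by
      rw [cfc_mul .., cfc_sub_const_eq_sub_algebraMap ha]
    rw [this, ← mul_assoc, hg]
  have hfa : ‖star (cfc f a) * (a - algebraMap ℂ A l)‖ ≤ r * ‖cfc f a‖ := by
    rw [← cfc_sub_const_eq_sub_algebraMap ha, ← cfc_star, ← cfc_mul ..]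
    refine norm_cfc_le (by positivity) fun z hz => ?_
    rw [norm_mul, norm_star, mul_comm]
    rcases le_total r ‖z - l‖ with hrz | hzr
    · have hfz : f z = 0 := by simp [f, h, hrz]
      rw [hfz, norm_zero, mul_zero]
      positivity
    · exact mul_le_mul hzr (norm_apply_le_norm_cfc f a hz) (norm_nonneg _) hr.le
  have hf_zero : cfc f a = 0 := by
    refine eq_zero_of_norm_star_mul_le hgf ?_ hgr
    calc ‖star (cfc f a) * ((a - algebraMap ℂ A l) * g)‖
        ≤ ‖star (cfc f a) * (a - algebraMap ℂ A l)‖ * ‖g‖ := by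
          rw [← mul_assoc]
          exact norm_mul_le ..
      _ ≤ r * ‖cfc f a‖ * ‖g‖ := by gcongr
      _ = ‖g‖ * r * ‖cfc f a‖ := by ring
  refine ⟨r, hr, fun w hw hwl => ?_⟩
  by_contra! hwr
  have hfw : f w = 0 := by simpa [hf_zero] using norm_apply_le_norm_cfc f a hw
  have hhw : h w ≠ 0 := by simpa [h] using hwr
  exact mul_ne_zero (sub_ne_zero.2 hwl) hhw hfw

end CStar

section Fredholm

open scoped LinearMap.FiniteRangeSetoid

variable {𝕜 E F : Type*} [NontriviallyNormedField 𝕜] [CompleteSpace 𝕜]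
  [AddCommGroup E] [Module 𝕜 E] [TopologicalSpace E] [IsTopologicalAddGroup E]
  [AddCommGroup F] [Module 𝕜 F] [TopologicalSpace F] [IsTopologicalAddGroup F]
  [ContinuousSMul 𝕜 F]

lemma exists_comp_comp_self_of_isFredholm {u : E →L[𝕜] F} (hu : u.IsFredholm) :
    ∃ v : F →L[𝕜] E, u ∘L v ∘L u = u := by
  obtain ⟨pkg⟩ := hu.nonempty_fredholmPackage
  refine ⟨pkg.quasiInverse, ?_⟩
  ext x
  simp [ContinuousLinearMap.FredholmPackage.quasiInverse, pkg.eq_equiv,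
    Submodule.projectionOnto_projection]

variable [ContinuousSMul 𝕜 E] [T2Space E] [T2Space F]

lemma isFredholm_of_finiteRange_equiv {u v : E →L[𝕜] F} (hu : u.IsFredholm)
    (huv : (v : E →ₗ[𝕜] F) ≈ (u : E →ₗ[𝕜] F)) : v.IsFredholm := by
  obtain ⟨w, hw⟩ := hu.exists_isQuasiInverse
  exact .of_isQuasiInverse (hw.congr (Setoid.refl _) huv)

lemma isFredholm_add_smulRight_iff {u : E →L[𝕜] F} (q : E →L[𝕜] 𝕜) (y : F) :
    (u + q.smulRight y).IsFredholm ↔ u.IsFredholm := by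
  have hrange : LinearMap.HasNoetherianRange (q.smulRight y : E →ₗ[𝕜] F) :=
    (LinearMap.HasNoetherianRange.of_isNoetherian_rng (f := (q : E →ₗ[𝕜] 𝕜))).comp_left
      (LinearMap.toSpanSingleton 𝕜 F y)
  have hequiv : ((u + q.smulRight y : E →L[𝕜] F) : E →ₗ[𝕜] F) ≈ (u : E →ₗ[𝕜] F) := by
    rw [LinearMap.FiniteRangeSetoid.equiv_iff_hasNoetherianRange]
    simpa using hrange
  exact ⟨fun h => isFredholm_of_finiteRange_equiv h (Setoid.symm hequiv),
    fun h => isFredholm_of_finiteRange_equiv h hequiv⟩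

lemma isFredholm_of_commute_mul_mul_self {u g : E →L[𝕜] E} (hcomm : Commute g u)
    (hg : u * g * u = u) [FiniteDimensional 𝕜 u.ker] : u.IsFredholm := by
  have hle : LinearMap.range (g * u - 1 : E →L[𝕜] E).toLinearMap ≤ u.ker := by
    rintro _ ⟨x, rfl⟩
    have hux : (u * (g * u - 1)) x = 0 := by
      rw [mul_sub, ← mul_assoc, hg, mul_one, sub_self, zero_apply]
    exact hux
  have hgu : LinearMap.HasNoetherianRange (g * u - 1 : E →L[𝕜] E).toLinearMap :=
    isNoetherian_of_le hle
  refine .of_isQuasiInverse (v := g) ⟨?_, ?_⟩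
  · exact LinearMap.FiniteRangeSetoid.equiv_iff_hasNoetherianRange.2 hgu
  · rw [hcomm.eq] at hgu
    exact LinearMap.FiniteRangeSetoid.equiv_iff_hasNoetherianRange.2 hgu

end Fredholm

lemma finrank_eq_one_of_disjoint_ker {K V : Type*} [Field K] [AddCommGroup V] [Module K V]
    {S : Submodule K V} (hS : S ≠ ⊥) {q : V →ₗ[K] K} (hq : Disjoint S q.ker) :
    Module.finrank K S = 1 := by
  have hinj : Function.Injective (q.domRestrict S) := LinearMap.injective_domRestrict_iff.2 hq
  have := Module.Finite.of_injective _ hinj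
  have := Submodule.nontrivial_iff_ne_bot.2 hS
  refine le_antisymm ?_ (Module.finrank_pos (R := K) (M := S))
  simpa using LinearMap.finrank_le_finrank_of_injective hinj

section Eigenvalue

variable {𝕜 E : Type*} [Field 𝕜] [TopologicalSpace 𝕜] [AddCommGroup E] [Module 𝕜 E]
  [TopologicalSpace E] [IsTopologicalAddGroup E] [ContinuousSMul 𝕜 E]

lemma mem_spectrum_of_ker_ne_bot {T : E →L[𝕜] E} {l : 𝕜}
    (hker : (T - algebraMap 𝕜 (E →L[𝕜] E) l).ker ≠ ⊥) : l ∈ spectrum 𝕜 T := by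
  have heig : Module.End.HasEigenvalue (T : Module.End 𝕜 E) l := by
    rw [Module.End.hasEigenvalue_iff, Module.End.eigenspace_def]
    exact hker
  exact fun hunit => heig.mem_spectrum (hunit.map ContinuousLinearMap.toLinearMapRingHom)

lemma exists_add_smulRight_apply_eq_smul_iff {A : E →L[𝕜] E} {l : 𝕜} (hl : l ∉ spectrum 𝕜 A)
    (q : E →L[𝕜] 𝕜) (y : E) :
    (∃ x, x ≠ 0 ∧ (A + q.smulRight y) x = l • x) ↔ q (resolvent A l y) = 1 := by
  have hunit : IsUnit (algebraMap 𝕜 (E →L[𝕜] E) l - A) := spectrum.notMem_iff.1 hl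
  have hleft (x : E) : resolvent A l (l • x - A x) = x :=
    congr($(Ring.inverse_mul_cancel _ hunit) x)
  have hright (x : E) : l • resolvent A l x - A (resolvent A l x) = x :=
    congr($(Ring.mul_inverse_cancel _ hunit) x)
  have heig (x : E) : (A + q.smulRight y) x = l • x ↔ q x • y = l • x - A x := by
    rw [eq_sub_iff_add_eq']
    rfl
  simp only [heig]
  constructor
  · rintro ⟨x, hx, hqx⟩
    have hx_eq : q x • resolvent A l y = x := by
      rw [← map_smul, hqx, hleft]
    have hqx_ne : q x ≠ 0 := by
      rintro h
      exact hx (by rw [← hx_eq, h, zero_smul])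
    have : q x * q (resolvent A l y) = q x := by
      simpa using congr(q $hx_eq)
    exact mul_eq_left₀ hqx_ne |>.1 this
  · intro hq
    refine ⟨resolvent A l y, ?_, ?_⟩
    · rintro h
      rw [h, map_zero] at hq
      exact zero_ne_one hq
    · rw [hq, one_smul, hright]

end Eigenvalue

section DiscreteSpectrum

variable {A T : H →L[ℂ] H} {l : ℂ}

lemma mem_specDisc_iff_isFredholm (hT : IsStarNormal T) :
    l ∈ specDisc T ↔ (T - algebraMap ℂ (H →L[ℂ] H) l).IsFredholm ∧
      (T - algebraMap ℂ (H →L[ℂ] H) l).ker ≠ ⊥ := by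
  constructor
  · rintro ⟨-, hiso, hker, hfin⟩
    obtain ⟨g, hcomm, hg⟩ := exists_commute_mul_mul_self_of_isolated hT hiso
    have : FiniteDimensional ℂ (T - algebraMap ℂ (H →L[ℂ] H) l).ker := hfin
    exact ⟨isFredholm_of_commute_mul_mul_self hcomm hg, hker⟩
  · rintro ⟨hfred, hker⟩
    obtain ⟨g, hg⟩ := exists_comp_comp_self_of_isFredholm hfred
    exact ⟨mem_spectrum_of_ker_ne_bot hker, isolated_of_mul_mul_self hT hg, hker, hfred.finite_ker⟩

lemma finrank_ker_eq_one_of_mem_specDisc_add_smulRight (hA : IsStarNormal A) {q : H →L[ℂ] ℂ} {ψ : H}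
    (hT : IsStarNormal (A + q.smulRight ψ)) (hl : l ∈ specDisc (A + q.smulRight ψ))
    (hlA : l ∉ specDisc A) :
    Module.finrank ℂ (A + q.smulRight ψ - algebraMap ℂ (H →L[ℂ] H) l).ker = 1 := by
  obtain ⟨hfred, hker⟩ := (mem_specDisc_iff_isFredholm hT).1 hl
  rw [add_sub_right_comm, isFredholm_add_smulRight_iff] at hfred
  have hinj : (A - algebraMap ℂ (H →L[ℂ] H) l).ker = ⊥ := by
    by_contra hne
    exact hlA ((mem_specDisc_iff_isFredholm hA).2 ⟨hfred, hne⟩)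
  refine finrank_eq_one_of_disjoint_ker hker (q := q) (Submodule.disjoint_def.2 fun φ hφ hqφ => ?_)
  have hAφ : φ ∈ (A - algebraMap ℂ (H →L[ℂ] H) l).ker := by
    have hTφ : A φ + q φ • ψ - l • φ = 0 := hφ
    have hqφ_zero : q φ = 0 := hqφ
    rw [hqφ_zero, zero_smul, add_zero] at hTφ
    exact hTφ
  rwa [hinj, Submodule.mem_bot] at hAφ

end DiscreteSpectrum

theorem rank_one_perturbation_eigenvalues_general (A : H →L[ℂ] H) (hA : IsStarNormal A)
    (χ ψ : H) (a : ℂ) (ha : a ≠ 0) (hT : IsStarNormal (A + a • (innerSL ℂ χ).smulRight ψ)) :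
    (∀ l ∈ specDisc (A + a • (innerSL ℂ χ).smulRight ψ), l ∉ specDisc A →
      Module.finrank ℂ
        (LinearMap.ker (((A + a • (innerSL ℂ χ).smulRight ψ) : H →ₗ[ℂ] H)
            - l • LinearMap.id)) = 1) ∧
    ∀ l ∉ spectrum ℂ A,
      ((∃ φ : H, φ ≠ 0 ∧ (A + a • (innerSL ℂ χ).smulRight ψ) φ = l • φ) ↔
        inner ℂ χ (Ring.inverse (algebraMap ℂ (H →L[ℂ] H) l - A) ψ) = a⁻¹) := by
  have hsmul : a • (innerSL ℂ χ).smulRight ψ = (a • innerSL ℂ χ).smulRight ψ := by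
    ext x
    simp [mul_smul]
  refine ⟨fun l hl hlA => ?_, fun l hl => ?_⟩
  · have hrank := finrank_ker_eq_one_of_mem_specDisc_add_smulRight hA (hsmul ▸ hT) (hsmul ▸ hl) hlA
    rw [← hsmul] at hrank
    exact hrank
  · rw [hsmul, exists_add_smulRight_apply_eq_smul_iff hl, ← mul_eq_one_iff_eq_inv₀ ha, mul_comm]
    rfl

lemma isSelfAdjoint_ofReal_smul_smulRight_innerSL (a : ℝ) (ψ : H) :
    IsSelfAdjoint ((a : ℂ) • (innerSL ℂ ψ).smulRight ψ) :=
  IsSelfAdjoint.smul (Complex.conj_ofReal a)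
    (InnerProductSpace.isPositive_rankOne_self ψ).isSelfAdjoint

/-- Let `H₀` be bounded self-adjoint with `Spec H₀ = Spec_ess H₀` (no discrete spectrum),
`‖ψ‖ = 1`, `a > 0` and `K = a⟨·,ψ⟩ψ`.  Then every isolated eigenvalue of finite
multiplicity of `H₀ + K` is non-degenerate, and for `λ ∉ Spec H₀`, `λ` is an eigenvalue of
`H₀ + K` iff `⟨(λ - H₀)⁻¹ ψ, ψ⟩ = a⁻¹`. -/
theorem rank_one_perturbation_eigenvalues
    (H₀ : H →L[ℂ] H) (hH₀ : IsSelfAdjoint H₀)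
    (hess : specDisc H₀ = ∅)
    (ψ : H) (hψ : ‖ψ‖ = 1) (a : ℝ) (ha : 0 < a) :
    (∀ l : ℂ, l ∈ specDisc (H₀ + (a : ℂ) • (innerSL ℂ ψ).smulRight ψ) →
      Module.finrank ℂ
        ↥(LinearMap.ker (((H₀ + (a : ℂ) • (innerSL ℂ ψ).smulRight ψ) : H →ₗ[ℂ] H)
            - l • LinearMap.id)) = 1) ∧
    ∀ l : ℂ, l ∉ spectrum ℂ H₀ →
      ((∃ φ : H, φ ≠ 0 ∧ (H₀ + (a : ℂ) • (innerSL ℂ ψ).smulRight ψ) φ = l • φ) ↔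
        (inner ℂ ψ (Ring.inverse (algebraMap ℂ (H →L[ℂ] H) l - H₀) ψ) : ℂ) = (a : ℂ)⁻¹) := by
  have hgen := rank_one_perturbation_eigenvalues_general H₀ hH₀.isStarNormal ψ ψ a
    (mod_cast ha.ne') (hH₀.add (isSelfAdjoint_ofReal_smul_smulRight_innerSL a ψ)).isStarNormal
  exact ⟨fun l hl => hgen.1 l hl (hess ▸ Set.notMem_empty l), hgen.2⟩

end
end

section
/- Let E ⊊ (−π, π] be a finite union of semi-open intervals, m(x) = 1 for x ∈ E and m(x) = −1 for x ∈ E^c := (−π,π] \ E, and let M be multiplication by m on L²(−π, π). Let L_n := span{e^{ikx} : −n ≤ k ≤ n}. Then the uniform limiting set of the second order spectra equals the whole unit circle: Λ(M) = {z ∈ ℂ : |z| = 1}. -/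
open Filter Topology MeasureTheory

attribute [local instance] Classical.propDecidable

noncomputable section

section Defs

variable {H : Type*} [NormedAddCommGroup H] [InnerProductSpace ℂ H] [CompleteSpace H]

/-- The compression `P T |_(ran P)` of a linear operator `T` to the range of `P`. -/
def compress (P : H →L[ℂ] H) (T : H →ₗ[ℂ] H) :
    LinearMap.range (P : H →ₗ[ℂ] H) →ₗ[ℂ] LinearMap.range (P : H →ₗ[ℂ] H) :=
  LinearMap.codRestrict (LinearMap.range (P : H →ₗ[ℂ] H))
    (((P : H →ₗ[ℂ] H).comp T).comp (LinearMap.range (P : H →ₗ[ℂ] H)).subtype)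
    fun c => ⟨T c, rfl⟩

/-- The second order spectrum of `M` relative to the range of `P`. -/
def spec2 (M : H →ₗ[ℂ] H) (P : H →L[ℂ] H) : Set ℂ :=
  {z | ¬ Function.Bijective (compress P (sqz M z))}

end Defs

/-- Lebesgue measure on `(-π, π]`. -/
def mπ : Measure ℝ := volume.restrict (Set.Ioc (-Real.pi) Real.pi)

/-- The space `L²(-π, π)`. -/
abbrev Hsp : Type := Lp ℂ 2 mπ

/-!
Since `M` is a symmetric involution, the compression of `(M - z)²` to `ran P` equals
`(z² + 1) - 2z · PM|_(ran P)`. Hence, for `ran P` of finite dimension, `z` lies in the second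
order spectrum if and only if `|z| = 1` and `Re z` is an eigenvalue of `PM|_(ran P)`, and it
suffices to approximate every `l ∈ [-1, 1]` by eigenvalues of the compressions of `M` to `L_n`.

Modulation by `e^{inx}` carries `L_n` into the Hardy space `H²` and commutes with `M`, so a good
approximate eigenvector of the Toeplitz operator `T` with symbol `m - l`, chosen to be an analytic
polynomial, is shifted back to a good approximate eigenvector of the compressions for large `n`.
As `T` is self-adjoint, such vectors exist as soon as `T` is not surjective. If `T f = 1`, then for
all `k > 0` the function `e^{ikx} f` is orthogonal to `(m - l) f`, so the real function
`(m - l)|f|²` has no nonzero frequencies and is constant. Since `m - l` takes values of both signs,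
the constant is `0`, so `(m - l) f = 0`, contradicting `T f = 1`.
-/

section SecondOrderSpectrum

lemma sq_add_one_eq_two_mul_iff {z : ℂ} {t : ℝ} (ht : |t| ≤ 1) :
    z ^ 2 + 1 = 2 * t * z ↔ ‖z‖ = 1 ∧ z.re = t := by
  have hnorm : ‖z‖ = 1 ↔ z.re * z.re + z.im * z.im = 1 := by
    rw [← Complex.normSq_apply, Complex.normSq_eq_norm_sq,
      pow_eq_one_iff_of_nonneg (norm_nonneg z) two_ne_zero]
  have hparts : z ^ 2 + 1 = 2 * t * z ↔
      z.re * z.re - z.im * z.im + 1 = 2 * t * z.re ∧ z.im * (z.re - t) = 0 := by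
    rw [Complex.ext_iff]
    simp only [sq, Complex.add_re, Complex.mul_re, Complex.one_re, Complex.re_ofNat,
      Complex.ofReal_re, Complex.im_ofNat, Complex.ofReal_im, mul_zero, sub_zero, Complex.mul_im,
      zero_mul, add_zero, Complex.add_im, Complex.one_im]
    refine and_congr_right fun _ => ⟨fun h => ?_, fun h => ?_⟩ <;> linarith
  rw [hparts, hnorm]
  constructor
  · rintro ⟨hre, him⟩
    have hret : z.re = t := by
      rcases mul_eq_zero.1 him with him | hret
      · have := abs_le.1 ht
        nlinarith
      · linarith
    exact ⟨by rw [← hret] at hre; linarith, hret⟩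
  · rintro ⟨hz, rfl⟩
    exact ⟨by linarith, by ring⟩

lemma norm_map_of_isSymmetric_of_involutive {𝕜 E : Type*} [RCLike 𝕜] [NormedAddCommGroup E]
    [InnerProductSpace 𝕜 E] {M : E →ₗ[𝕜] E} (hM : M.IsSymmetric) (hinv : Function.Involutive M)
    (v : E) : ‖M v‖ = ‖v‖ := by
  rw [norm_eq_sqrt_re_inner (𝕜 := 𝕜), norm_eq_sqrt_re_inner (𝕜 := 𝕜), hM, hinv]

lemma exists_hasEigenvalue_abs_sub_lt {𝕜 E : Type*} [RCLike 𝕜] [NormedAddCommGroup E]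
    [InnerProductSpace 𝕜 E] [FiniteDimensional 𝕜 E] {T : E →ₗ[𝕜] E} (hT : T.IsSymmetric)
    {l ε : ℝ} {v : E} (hv : ‖T v - (l : 𝕜) • v‖ < ε * ‖v‖) :
    ∃ μ : ℝ, Module.End.HasEigenvalue T (μ : 𝕜) ∧ |μ - l| < ε := by
  by_contra! hfar
  have hε : 0 < ε := pos_of_mul_pos_left ((norm_nonneg _).trans_lt hv) (norm_nonneg _)
  let b := hT.eigenvectorBasis rfl
  have hcoord i : inner 𝕜 (b i) (T v - (l : 𝕜) • v) =
      ((hT.eigenvalues rfl i - l : ℝ) : 𝕜) * inner 𝕜 (b i) v := by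
    have := hT.eigenvectorBasis_apply_self_apply rfl v i
    rw [OrthonormalBasis.repr_apply_apply, OrthonormalBasis.repr_apply_apply] at this
    rw [inner_sub_right, inner_smul_right, this, RCLike.ofReal_sub, sub_mul]
  refine hv.not_ge (le_of_sq_le_sq ?_ (norm_nonneg _))
  rw [mul_pow, ← b.sum_sq_norm_inner_right v, ← b.sum_sq_norm_inner_right, Finset.mul_sum]
  refine Finset.sum_le_sum fun i _ => ?_
  rw [hcoord, norm_mul, mul_pow, RCLike.norm_ofReal]
  gcongr
  exact hfar _ (hT.hasEigenvalue_eigenvalues rfl i)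

variable {H : Type*} [NormedAddCommGroup H] [InnerProductSpace ℂ H]

@[simp]
lemma coe_compress_apply (P : H →L[ℂ] H) (T : H →ₗ[ℂ] H)
    (v : LinearMap.range (P : H →ₗ[ℂ] H)) : (compress P T v : H) = P (T v) := rfl

lemma apply_eq_self_of_mem_range {P : H →L[ℂ] H} (hP : IsIdempotentElem P) {v : H}
    (hv : v ∈ LinearMap.range (P : H →ₗ[ℂ] H)) : P v = v := by
  obtain ⟨w, rfl⟩ := hv
  exact DFunLike.congr_fun hP w

lemma compress_sqz_of_involutive {M : H →ₗ[ℂ] H} (hinv : Function.Involutive M) {P : H →L[ℂ] H}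
    (hP : IsIdempotentElem P) (z : ℂ) (v : LinearMap.range (P : H →ₗ[ℂ] H)) :
    compress P (sqz M z) v = (z ^ 2 + 1) • v - (2 * z) • compress P M v := by
  ext
  have hsq : sqz M z v = (z ^ 2 + 1) • (v : H) - (2 * z) • M v := by
    simp only [sqz, LinearMap.comp_apply, LinearMap.sub_apply, LinearMap.smul_apply,
      LinearMap.id_apply, map_sub, map_smul, hinv (v : H)]
    module
  simp only [coe_compress_apply, hsq, map_sub, map_smul, apply_eq_self_of_mem_range hP v.2,
    Submodule.coe_sub, Submodule.coe_smul]

variable [CompleteSpace H]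

lemma isSymmetric_compress {M : H →ₗ[ℂ] H} (hM : M.IsSymmetric) {P : H →L[ℂ] H}
    (hP : IsStarProjection P) : (compress P M).IsSymmetric := by
  intro v w
  have hPsymm := hP.isSelfAdjoint.isSymmetric
  calc inner ℂ (P (M v)) (w : H)
      = inner ℂ (M v) (P w) := hPsymm _ _
    _ = inner ℂ (P v) (M w) := by
      rw [apply_eq_self_of_mem_range hP.isIdempotentElem w.2,
        apply_eq_self_of_mem_range hP.isIdempotentElem v.2]
      exact hM _ _
    _ = inner ℂ (v : H) (P (M w)) := hPsymm _ _

lemma norm_apply_le_of_isStarProjection {P : H →L[ℂ] H} (hP : IsStarProjection P) (v : H) :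
    ‖P v‖ ≤ ‖v‖ := by
  obtain ⟨K, _, rfl⟩ := isStarProjection_iff_eq_starProjection.1 hP
  exact K.norm_starProjection_apply_le v

lemma norm_le_one_of_hasEigenvalue_compress {M : H →ₗ[ℂ] H} (hM : M.IsSymmetric)
    (hinv : Function.Involutive M) {P : H →L[ℂ] H} (hP : IsStarProjection P) {w : ℂ}
    (hw : Module.End.HasEigenvalue (compress P M) w) : ‖w‖ ≤ 1 := by
  obtain ⟨v, hv⟩ := hw.exists_hasEigenvector
  refine le_of_mul_le_mul_right ?_ (norm_pos_iff.2 hv.2)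
  calc ‖w‖ * ‖v‖ = ‖P (M v)‖ := by rw [← norm_smul, ← hv.apply_eq_smul]; rfl
    _ ≤ ‖M v‖ := norm_apply_le_of_isStarProjection hP _
    _ = 1 * ‖v‖ := by rw [norm_map_of_isSymmetric_of_involutive hM hinv, one_mul]; rfl

theorem mem_spec2_iff_of_involutive {M : H →ₗ[ℂ] H} (hM : M.IsSymmetric)
    (hinv : Function.Involutive M) {P : H →L[ℂ] H} (hP : IsStarProjection P)
    [FiniteDimensional ℂ (LinearMap.range (P : H →ₗ[ℂ] H))] {z : ℂ} :
    z ∈ spec2 M P ↔ ‖z‖ = 1 ∧ Module.End.HasEigenvalue (compress P M) (z.re : ℂ) := by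
  have hker : z ∈ spec2 M P ↔
      ∃ v, v ≠ 0 ∧ (z ^ 2 + 1) • v = (2 * z) • compress P M v := by
    rw [spec2, Set.mem_ofPred_eq, Function.Bijective, ← LinearMap.injective_iff_surjective,
      and_self, injective_iff_map_eq_zero]
    push Not
    simp only [compress_sqz_of_involutive hinv hP.isIdempotentElem, sub_eq_zero, and_comm]
  rw [hker]
  constructor
  · rintro ⟨v, hv, hzv⟩
    have hz : z ≠ 0 := by
      rintro rfl
      simp [hv] at hzv
    set w := (z ^ 2 + 1) / (2 * z) with hw
    have hwz : z ^ 2 + 1 = 2 * w * z := by rw [hw]; field_simp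
    have heig : Module.End.HasEigenvalue (compress P M) w := by
      refine Module.End.hasEigenvalue_of_hasEigenvector (x := v)
        ⟨Module.End.mem_eigenspace_iff.2 ?_, hv⟩
      rw [hw, div_eq_inv_mul, mul_smul, hzv, inv_smul_smul₀ (by simp [hz])]
    have hwre : (w.re : ℂ) = w :=
      Complex.conj_eq_iff_re.1 ((isSymmetric_compress hM hP).conj_eigenvalue_eq_self heig)
    have hwle : |w.re| ≤ 1 := (Complex.abs_re_le_norm w).trans
      (norm_le_one_of_hasEigenvalue_compress hM hinv hP heig)
    obtain ⟨hz1, hzre⟩ := (sq_add_one_eq_two_mul_iff hwle).1 (by rwa [hwre])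
    exact ⟨hz1, by rwa [hzre, hwre]⟩
  · rintro ⟨hz1, heig⟩
    obtain ⟨v, hv⟩ := heig.exists_hasEigenvector
    have hz := (sq_add_one_eq_two_mul_iff (hz1 ▸ Complex.abs_re_le_norm z)).2 ⟨hz1, rfl⟩
    exact ⟨v, hv.2, by rw [hv.apply_eq_smul, hz, smul_smul, mul_right_comm]⟩

lemma exists_continuous_section_re {z : ℂ} (hz : ‖z‖ = 1) :
    ∃ γ : ℝ → ℂ, Continuous γ ∧ γ z.re = z ∧ ∀ t, |t| ≤ 1 → ‖γ t‖ = 1 ∧ (γ t).re = t := by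
  obtain ⟨σ, hσ, harg⟩ : ∃ σ : ℝ, (σ = 1 ∨ σ = -1) ∧ σ * |z.arg| = z.arg := by
    rcases abs_choice z.arg with h | h
    · exact ⟨1, .inl rfl, by rw [one_mul, h]⟩
    · exact ⟨-1, .inr rfl, by rw [h, neg_one_mul, neg_neg]⟩
  have hexp : Complex.exp (z.arg * Complex.I) = z := by
    simpa only [hz, Complex.ofReal_one, one_mul] using Complex.norm_mul_exp_arg_mul_I z
  have harccos : Real.arccos z.re = |z.arg| := by
    rw [← hexp, Complex.exp_ofReal_mul_I_re, hexp, ← Real.cos_abs,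
      Real.arccos_cos (abs_nonneg _) (Complex.abs_arg_le_pi z)]
  refine ⟨fun t => Complex.exp ((σ * Real.arccos t : ℝ) * Complex.I), by fun_prop, ?_,
    fun t ht => ⟨Complex.norm_exp_ofReal_mul_I _, ?_⟩⟩
  · simp only [harccos, harg, hexp]
  · have hcos : Real.cos (σ * Real.arccos t) = Real.cos (Real.arccos t) := by
      rcases hσ with rfl | rfl
      · rw [one_mul]
      · rw [neg_one_mul, Real.cos_neg]
    rw [Complex.exp_ofReal_mul_I_re, hcos, Real.cos_arccos (abs_le.1 ht).1 (abs_le.1 ht).2]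

section LimitingSet

variable {M : H →ₗ[ℂ] H} {P : ℕ → H →L[ℂ] H}
  [∀ n, FiniteDimensional ℂ (LinearMap.range (P n : H →ₗ[ℂ] H))] {z : ℂ}

lemma norm_eq_one_of_tendsto_mem_spec2 (hM : M.IsSymmetric) (hinv : Function.Involutive M)
    (hP : ∀ n, IsStarProjection (P n)) {zs : ℕ → ℂ} (hzs : ∀ n, zs n ∈ spec2 M (P n))
    (hlim : Tendsto zs atTop (𝓝 z)) : ‖z‖ = 1 := by
  have hnorm : ∀ n, ‖zs n‖ = 1 := fun n =>
    ((mem_spec2_iff_of_involutive hM hinv (hP n)).1 (hzs n)).1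
  exact tendsto_nhds_unique hlim.norm (by simp only [hnorm, tendsto_const_nhds])

lemma exists_tendsto_mem_spec2_of_tendsto_hasEigenvalue (hM : M.IsSymmetric)
    (hinv : Function.Involutive M) (hP : ∀ n, IsStarProjection (P n)) (hz : ‖z‖ = 1) {μ : ℕ → ℝ}
    (hμ : ∀ n, Module.End.HasEigenvalue (compress (P n) M) (μ n : ℂ))
    (hlim : Tendsto μ atTop (𝓝 z.re)) :
    ∃ zs : ℕ → ℂ, (∀ n, zs n ∈ spec2 M (P n)) ∧ Tendsto zs atTop (𝓝 z) := by
  obtain ⟨γ, hγ, hγz, hγsec⟩ := exists_continuous_section_re hz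
  refine ⟨γ ∘ μ, fun n => ?_, hγz ▸ hγ.continuousAt.tendsto.comp hlim⟩
  have hle : |μ n| ≤ 1 := by
    simpa only [Complex.norm_real, Real.norm_eq_abs] using
      norm_le_one_of_hasEigenvalue_compress hM hinv (hP n) (hμ n)
  obtain ⟨hnorm, hre⟩ := hγsec (μ n) hle
  exact (mem_spec2_iff_of_involutive hM hinv (hP n)).2 ⟨hnorm, hre.symm ▸ hμ n⟩

end LimitingSet

end SecondOrderSpectrum

lemma exists_seq_mem_tendsto {X : Type*} [PseudoMetricSpace X] {S : ℕ → Set X} {x : X}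
    (hne : ∀ n, (S n).Nonempty) (hnear : ∀ ε > 0, ∀ᶠ n in atTop, ∃ s ∈ S n, dist s x < ε) :
    ∃ u : ℕ → X, (∀ n, u n ∈ S n) ∧ Tendsto u atTop (𝓝 x) := by
  have hchoice : ∀ n : ℕ, ∃ s ∈ S n, dist x s < Metric.infDist x (S n) + 1 / ((n : ℝ) + 1) :=
    fun n => (Metric.infDist_lt_iff (hne n)).1 (lt_add_of_pos_right _ Nat.one_div_pos_of_nat)
  choose u hu hdist using hchoice
  have hinf : Tendsto (fun n => Metric.infDist x (S n)) atTop (𝓝 0) := by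
    refine Metric.tendsto_nhds.2 fun ε hε => (hnear ε hε).mono fun n ⟨s, hs, hsx⟩ => ?_
    rw [Real.dist_0_eq_abs, abs_of_nonneg Metric.infDist_nonneg]
    exact (Metric.infDist_le_dist_of_mem hs).trans_lt (dist_comm s x ▸ hsx)
  refine ⟨u, hu, tendsto_iff_dist_tendsto_zero.2 (squeeze_zero (fun _ => dist_nonneg)
    (fun n => (dist_comm (u n) x).trans_le (hdist n).le) ?_)⟩
  simpa only [add_zero] using hinf.add tendsto_one_div_add_atTop_nhds_zero_nat

section BoundedBelow

variable {𝕜 E F : Type*} [RCLike 𝕜] [NormedAddCommGroup E] [InnerProductSpace 𝕜 E]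
  [CompleteSpace E] [NormedAddCommGroup F] [InnerProductSpace 𝕜 F]

lemma exists_norm_apply_lt_of_not_surjective {T : E →L[𝕜] E} (hT : IsSelfAdjoint T)
    (hsurj : ¬ Function.Surjective T) {ε : ℝ} (hε : 0 < ε) : ∃ x, ‖T x‖ < ε * ‖x‖ := by
  by_contra! hbelow
  have hsq : IsUnit (T * T) := by
    refine ContinuousLinearMap.isUnit_of_forall_le_norm_inner_map _
      (c := ⟨ε ^ 2, sq_nonneg ε⟩) (sq_pos_of_pos hε) fun x => ?_
    calc ‖x‖ ^ 2 * ε ^ 2 = (ε * ‖x‖) ^ 2 := by ring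
      _ ≤ ‖T x‖ ^ 2 := by gcongr; exact hbelow x
      _ = ‖inner 𝕜 ((T * T) x) x‖ := by
        rw [mul_apply_eq_comp, hT.isSymmetric.apply_clm, inner_self_eq_norm_sq_to_K]
        simp
  exact hsurj (Function.Surjective.of_comp
    (ContinuousLinearMap.isUnit_iff_bijective.1 hsq).surjective)

lemma norm_apply_le_norm_orthogonalProjectionOnto {P : E →L[𝕜] E} (hP : IsStarProjection P)
    {A : Submodule 𝕜 F} [A.HasOrthogonalProjection] (U : E →ₗᵢ[𝕜] F)
    (hU : ∀ v, U (P v) ∈ A) (x : E) : ‖P x‖ ≤ ‖A.orthogonalProjectionOnto (U x)‖ := by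
  let y : A := ⟨U (P x), hU x⟩
  have hy : ‖y‖ = ‖P x‖ := U.norm_map _
  have hinner : inner 𝕜 (P x) (P x) = inner 𝕜 y (A.orthogonalProjectionOnto (U x)) := by
    rw [Submodule.inner_orthogonalProjectionOnto_eq_of_mem_left, U.inner_map_map]
    have hPP : P (P x) = P x := DFunLike.congr_fun hP.isIdempotentElem x
    calc inner 𝕜 (P x) (P x) = inner 𝕜 (P (P x)) x := (hP.isSelfAdjoint.isSymmetric _ _).symm
      _ = inner 𝕜 (P x) x := by rw [hPP]
  rcases (norm_nonneg (P x)).eq_or_lt with h0 | hpos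
  · exact h0 ▸ norm_nonneg _
  · refine le_of_mul_le_mul_left ?_ hpos
    calc ‖P x‖ * ‖P x‖ = ‖inner 𝕜 (P x) (P x)‖ := by
          rw [inner_self_eq_norm_sq_to_K, norm_pow, RCLike.norm_ofReal, abs_norm, sq]
      _ ≤ ‖P x‖ * ‖A.orthogonalProjectionOnto (U x)‖ := by
          rw [hinner, ← hy]; exact norm_inner_le_norm _ _

end BoundedBelow

section FourierUniqueness

open scoped NNReal BoundedContinuousFunction

lemma ae_eq_zero_of_forall_integral_boundedContinuous_smul_eq_zero {X F : Type*}
    [TopologicalSpace X] [MeasurableSpace X] [BorelSpace X] [HasOuterApproxClosed X]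
    [NormedAddCommGroup F] [NormedSpace ℝ F] [CompleteSpace F] {μ : Measure X} {g : X → F}
    (hg : Integrable g μ) (h0 : ∀ φ : X →ᵇ ℝ≥0, ∫ x, φ x • g x ∂μ = 0) : g =ᵐ[μ] 0 := by
  refine ae_eq_zero_of_forall_setIntegral_isClosed_eq_zero hg fun A hA => ?_
  have hlim : Tendsto (fun n => ∫ x, hA.apprSeq n x • g x ∂μ) atTop
      (𝓝 (∫ x, A.indicator (fun _ => (1 : ℝ≥0)) x • g x ∂μ)) := by
    refine tendsto_integral_of_dominated_convergence (fun x => ‖g x‖)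
      (fun n => (hA.apprSeq n).continuous.aestronglyMeasurable.smul hg.1) hg.norm
      (fun n => .of_forall fun x => ?_) (.of_forall fun x => ?_)
    · rw [NNReal.smul_def, norm_smul, NNReal.norm_eq]
      exact mul_le_of_le_one_left (norm_nonneg _)
        (NNReal.coe_le_one.2 (HasOuterApproxClosed.apprSeq_apply_le_one hA n x))
    · exact (tendsto_pi_nhds.1 (HasOuterApproxClosed.tendsto_apprSeq hA) x).smul_const _
  rw [← integral_indicator hA.measurableSet]
  refine (integral_congr_ae (.of_forall fun x => ?_)).trans
    (tendsto_nhds_unique hlim (by simp only [h0, tendsto_const_nhds]))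
  by_cases hx : x ∈ A <;> simp [hx]

section AddCircle

variable {T : ℝ} [Fact (0 < T)] {μ : Measure (AddCircle T)} {g : AddCircle T → ℂ}

lemma integrable_continuousMap_mul (hg : Integrable g μ) (G : C(AddCircle T, ℂ)) :
    Integrable (fun x => G x * g x) μ :=
  hg.bdd_mul G.continuous.aestronglyMeasurable (.of_forall G.norm_coe_le_norm)

lemma integral_continuousMap_mul_eq_zero (hg : Integrable g μ)
    (h0 : ∀ n : ℤ, ∫ x, fourier n x * g x ∂μ = 0) (G : C(AddCircle T, ℂ)) :
    ∫ x, G x * g x ∂μ = 0 := by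
  let Φ : C(AddCircle T, ℂ) →L[ℂ] ℂ := LinearMap.mkContinuous
    { toFun := fun G => ∫ x, G x * g x ∂μ
      map_add' := fun G₁ G₂ => by
        simp only [ContinuousMap.add_apply, add_mul]
        exact integral_add (integrable_continuousMap_mul hg G₁) (integrable_continuousMap_mul hg G₂)
      map_smul' := fun c G => by
        simp only [ContinuousMap.smul_apply, smul_eq_mul, mul_assoc, integral_const_mul,
          RingHom.id_apply] }
    (∫ x, ‖g x‖ ∂μ) fun G => by
      rw [mul_comm, ← integral_const_mul]
      refine norm_integral_le_of_norm_le (hg.norm.const_mul _) (.of_forall fun x => ?_)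
      rw [norm_mul]
      gcongr
      exact G.norm_coe_le_norm x
  have hspan : (Submodule.span ℂ (Set.range (@fourier T))).topologicalClosure ≤ Φ.ker := by
    refine Submodule.topologicalClosure_minimal _ (Submodule.span_le.2 ?_) Φ.isClosed_ker
    rintro _ ⟨n, rfl⟩
    exact h0 n
  rw [span_fourier_closure_eq_top] at hspan
  exact hspan (Submodule.mem_top : G ∈ ⊤)

theorem ae_eq_zero_of_forall_integral_fourier_mul_eq_zero (hg : Integrable g μ)
    (h0 : ∀ n : ℤ, ∫ x, fourier n x * g x ∂μ = 0) : g =ᵐ[μ] 0 := by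
  refine ae_eq_zero_of_forall_integral_boundedContinuous_smul_eq_zero hg fun φ => ?_
  simp only [NNReal.smul_def, Complex.real_smul]
  exact integral_continuousMap_mul_eq_zero hg h0 ⟨fun x => ((φ x : ℝ) : ℂ), by fun_prop⟩

end AddCircle

end FourierUniqueness

section FourierMode

/-- The exponential `e^{ikx}` as a function on `ℝ`. -/
def fourierMode (k : ℤ) (x : ℝ) : ℂ := Complex.exp (Complex.I * k * x)

@[simp]
lemma fourierMode_zero (x : ℝ) : fourierMode 0 x = 1 := by simp [fourierMode]

@[simp]
lemma norm_fourierMode (k : ℤ) (x : ℝ) : ‖fourierMode k x‖ = 1 := by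
  simp [fourierMode, Complex.norm_exp]

@[fun_prop]
lemma continuous_fourierMode (k : ℤ) : Continuous (fourierMode k) := by
  unfold fourierMode
  fun_prop

lemma fourierMode_add (j k : ℤ) (x : ℝ) :
    fourierMode (j + k) x = fourierMode j x * fourierMode k x := by
  rw [fourierMode, fourierMode, fourierMode, ← Complex.exp_add]
  push_cast
  ring_nf

lemma conj_fourierMode (k : ℤ) (x : ℝ) :
    (starRingEnd ℂ) (fourierMode k x) = fourierMode (-k) x := by
  rw [fourierMode, fourierMode, ← Complex.exp_conj]
  simp

lemma fourier_coe_eq_fourierMode (k : ℤ) (x : ℝ) :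
    fourier k (x : AddCircle (2 * Real.pi)) = fourierMode k x := by
  have : (Real.pi : ℂ) ≠ 0 := by exact_mod_cast Real.pi_ne_zero
  rw [fourier_coe_apply, fourierMode]
  push_cast
  congr 1
  field_simp

instance : IsFiniteMeasure mπ := inferInstanceAs (IsFiniteMeasure (volume.restrict _))

lemma integral_fourierMode_of_ne_zero {k : ℤ} (hk : k ≠ 0) : ∫ x, fourierMode k x ∂mπ = 0 := by
  have hperiod : Complex.exp (Complex.I * k * Real.pi) =
      Complex.exp (Complex.I * k * (-Real.pi : ℝ)) :=
    Complex.exp_eq_exp_iff_exists_int.2 ⟨k, by push_cast; ring⟩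
  rw [mπ, ← intervalIntegral.integral_of_le (neg_le_self Real.pi_pos.le)]
  simp only [fourierMode]
  rw [integral_exp_mul_complex (by simp [hk]), hperiod, sub_self, zero_div]

lemma integral_fourierMode_zero : ∫ x, fourierMode 0 x ∂mπ = 2 * Real.pi := by
  simp only [fourierMode_zero]
  rw [mπ, ← intervalIntegral.integral_of_le (neg_le_self Real.pi_pos.le),
    intervalIntegral.integral_const, sub_neg_eq_add, ← two_mul, Complex.real_smul, mul_one]
  push_cast
  rfl

lemma integrable_fourierMode_mul {h : ℝ → ℂ} {μ : Measure ℝ} (hh : Integrable h μ) (k : ℤ) :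
    Integrable (fun x => fourierMode k x * h x) μ :=
  hh.bdd_mul (continuous_fourierMode k).aestronglyMeasurable
    (.of_forall fun x => (norm_fourierMode k x).le)

lemma mπ_eq_restrict_Ioc_add :
    mπ = volume.restrict (Set.Ioc (-Real.pi) (-Real.pi + 2 * Real.pi)) := by
  rw [mπ, two_mul, neg_add_cancel_left]

lemma ae_eq_zero_of_forall_integral_fourierMode_mul_eq_zero {h : ℝ → ℂ} (hh : Integrable h mπ)
    (h0 : ∀ k : ℤ, ∫ x, fourierMode k x * h x ∂mπ = 0) : h =ᵐ[mπ] 0 := by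
  have : Fact (0 < 2 * Real.pi) := ⟨Real.two_pi_pos⟩
  rw [mπ_eq_restrict_Ioc_add] at *
  let g := AddCircle.liftIoc (2 * Real.pi) (-Real.pi) h
  have hlift : ∀ x ∈ Set.Ioc (-Real.pi) (-Real.pi + 2 * Real.pi), g x = h x :=
    fun x hx => AddCircle.liftIoc_coe_apply hx
  have hg : Integrable g := memLp_one_iff_integrable.1 (memLp_one_iff_integrable.2 hh).memLp_liftIoc
  have hg0 : g =ᵐ[volume] 0 := by
    refine ae_eq_zero_of_forall_integral_fourier_mul_eq_zero hg fun k => ?_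
    rw [← AddCircle.integral_preimage _ (-Real.pi), ← h0 k]
    refine setIntegral_congr_fun measurableSet_Ioc fun x hx => ?_
    simp only [fourier_coe_eq_fourierMode, hlift x hx]
  filter_upwards [(AddCircle.measurePreserving_mk _ (-Real.pi)).quasiMeasurePreserving.ae hg0,
    ae_restrict_mem measurableSet_Ioc] with x hx hxI
  exact (hlift x hxI).symm.trans hx

lemma exists_ae_eq_const_of_forall_integral_fourierMode_mul_eq_zero {h : ℝ → ℂ}
    (hh : Integrable h mπ) (h0 : ∀ k : ℤ, k ≠ 0 → ∫ x, fourierMode k x * h x ∂mπ = 0) :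
    ∃ c : ℂ, h =ᵐ[mπ] fun _ => c := by
  obtain ⟨c, hc⟩ : ∃ c : ℂ, ∫ x, h x ∂mπ = (2 * Real.pi) * c :=
    ⟨_, (mul_div_cancel₀ _ (by exact_mod_cast Real.two_pi_pos.ne')).symm⟩
  have hcoeff : ∀ k : ℤ, ∫ x, fourierMode k x * (h x - c) ∂mπ = 0 := by
    intro k
    simp only [mul_sub]
    rw [integral_sub (integrable_fourierMode_mul hh k)
      (integrable_fourierMode_mul (integrable_const c) k), integral_mul_const]
    rcases eq_or_ne k 0 with rfl | hk
    · rw [integral_fourierMode_zero, ← hc]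
      simp only [fourierMode_zero, one_mul, sub_self]
    · rw [h0 k hk, integral_fourierMode_of_ne_zero hk, zero_mul, sub_zero]
  refine ⟨c, ?_⟩
  filter_upwards [ae_eq_zero_of_forall_integral_fourierMode_mul_eq_zero
    (hh.sub (integrable_const c)) hcoeff] with x hx
  exact sub_eq_zero.1 hx

lemma exists_ae_eq_const_of_forall_integral_fourierMode_neg_mul_eq_zero {h : ℝ → ℝ}
    (hh : Integrable h mπ) (h0 : ∀ k : ℤ, 0 < k → ∫ x, fourierMode (-k) x * (h x : ℂ) ∂mπ = 0) :
    ∃ c : ℝ, h =ᵐ[mπ] fun _ => c := by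
  have hcoeff : ∀ k : ℤ, k ≠ 0 → ∫ x, fourierMode k x * (h x : ℂ) ∂mπ = 0 := by
    intro k hk
    rcases lt_or_gt_of_ne hk with hneg | hpos
    · simpa only [neg_neg] using h0 (-k) (neg_pos.2 hneg)
    · have hconj := congrArg (starRingEnd ℂ) (h0 k hpos)
      rw [← integral_conj, map_zero] at hconj
      simpa only [map_mul, conj_fourierMode, neg_neg, Complex.conj_ofReal] using hconj
  obtain ⟨c, hc⟩ := exists_ae_eq_const_of_forall_integral_fourierMode_mul_eq_zero hh.ofReal hcoeff
  refine ⟨c.re, ?_⟩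
  filter_upwards [hc] with x hx
  rw [← hx]
  rfl

end FourierMode

section HardySpace

lemma memLp_fourierMode_mul {f : ℝ → ℂ} {p : ENNReal} {μ : Measure ℝ} (hf : MemLp f p μ)
    (k : ℤ) : MemLp (fun x => fourierMode k x * f x) p μ :=
  hf.of_le ((continuous_fourierMode k).aestronglyMeasurable.mul hf.1)
    (.of_forall fun x => by rw [norm_mul, norm_fourierMode, one_mul])

/-- Multiplication by `e^{ikx}` on `L²(-π, π)`. -/
def modulation (k : ℤ) : Hsp →ₗᵢ[ℂ] Hsp where
  toFun f := (memLp_fourierMode_mul (Lp.memLp f) k).toLp _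
  map_add' f g := by
    rw [← MemLp.toLp_add, MemLp.toLp_eq_toLp_iff]
    filter_upwards [Lp.coeFn_add f g] with x hx
    rw [hx, Pi.add_apply, mul_add, Pi.add_apply]
  map_smul' c f := by
    rw [RingHom.id_apply, ← MemLp.toLp_const_smul, MemLp.toLp_eq_toLp_iff]
    filter_upwards [Lp.coeFn_smul c f] with x hx
    rw [hx, Pi.smul_apply, mul_smul_comm, Pi.smul_apply]
  norm_map' f := by
    change ‖(memLp_fourierMode_mul (Lp.memLp f) k).toLp _‖ = ‖f‖
    rw [Lp.norm_toLp, Lp.norm_def]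
    refine congrArg _ (eLpNorm_congr_norm_ae (.of_forall fun x => ?_))
    rw [norm_mul, norm_fourierMode, one_mul]

lemma coeFn_modulation (k : ℤ) (f : Hsp) :
    modulation k f =ᵐ[mπ] fun x => fourierMode k x * f x :=
  (memLp_fourierMode_mul (Lp.memLp f) k).coeFn_toLp

lemma modulation_modulation (j k : ℤ) (f : Hsp) :
    modulation j (modulation k f) = modulation (j + k) f := by
  refine Lp.ext ?_
  filter_upwards [coeFn_modulation j (modulation k f), coeFn_modulation k f,
    coeFn_modulation (j + k) f] with x hjk hk hadd
  rw [hjk, hk, hadd, fourierMode_add, mul_assoc]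

@[simp]
lemma modulation_zero_apply (f : Hsp) : modulation 0 f = f := by
  refine Lp.ext ?_
  filter_upwards [coeFn_modulation 0 f] with x hx
  rw [hx, fourierMode_zero, one_mul]

/-- The exponential `e^{ikx}` as an element of `L²(-π, π)`. -/
def fourierModeLp (k : ℤ) : Hsp :=
  MemLp.toLp (fourierMode k) <|
    .of_bound (continuous_fourierMode k).aestronglyMeasurable 1
      (.of_forall fun x => (norm_fourierMode k x).le)

lemma coeFn_fourierModeLp (k : ℤ) : fourierModeLp k =ᵐ[mπ] fourierMode k := MemLp.coeFn_toLp _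

lemma modulation_fourierModeLp (j k : ℤ) :
    modulation j (fourierModeLp k) = fourierModeLp (j + k) := by
  refine Lp.ext ?_
  filter_upwards [coeFn_modulation j (fourierModeLp k), coeFn_fourierModeLp k,
    coeFn_fourierModeLp (j + k)] with x hj hk hadd
  rw [hj, hk, hadd, fourierMode_add]

lemma inner_fourierModeLp (j k : ℤ) :
    inner ℂ (fourierModeLp j) (fourierModeLp k) = ∫ x, fourierMode (k - j) x ∂mπ := by
  rw [L2.inner_def]
  refine integral_congr_ae ?_
  filter_upwards [coeFn_fourierModeLp j, coeFn_fourierModeLp k] with x hj hk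
  rw [hj, hk, RCLike.inner_apply, conj_fourierMode, sub_eq_add_neg, fourierMode_add]

lemma fourierModeLp_zero_ne_zero : fourierModeLp 0 ≠ 0 := by
  intro h
  have hinner := inner_fourierModeLp 0 0
  rw [sub_self, integral_fourierMode_zero, h, inner_zero_left] at hinner
  exact Real.two_pi_pos.ne (by exact_mod_cast hinner)

/-- The space `L_n` of trigonometric polynomials of degree at most `n`. -/
def trigPoly (n : ℕ) : Submodule ℂ Hsp :=
  Submodule.span ℂ (fourierModeLp '' {k : ℤ | |k| ≤ (n : ℤ)})

/-- The trigonometric polynomials with nonnegative frequencies. -/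
def analyticPoly : Submodule ℂ Hsp := Submodule.span ℂ (fourierModeLp '' {k : ℤ | 0 ≤ k})

/-- The Hardy space `H²`: the closed span of the exponentials with nonnegative frequencies. -/
def hardySpace : Submodule ℂ Hsp := analyticPoly.topologicalClosure

instance : CompleteSpace hardySpace :=
  analyticPoly.isClosed_topologicalClosure.completeSpace_coe

lemma fourierModeLp_mem_trigPoly {k : ℤ} {n : ℕ} (hk : |k| ≤ n) : fourierModeLp k ∈ trigPoly n :=
  Submodule.subset_span ⟨k, hk, rfl⟩

lemma fourierModeLp_mem_analyticPoly {k : ℤ} (hk : 0 ≤ k) : fourierModeLp k ∈ analyticPoly :=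
  Submodule.subset_span ⟨k, hk, rfl⟩

lemma analyticPoly_le_hardySpace : analyticPoly ≤ hardySpace :=
  analyticPoly.le_topologicalClosure

lemma hardySpace_le {K : Submodule ℂ Hsp} (hK : IsClosed (K : Set Hsp))
    (hmode : ∀ k : ℤ, 0 ≤ k → fourierModeLp k ∈ K) : hardySpace ≤ K :=
  Submodule.topologicalClosure_minimal _
    (Submodule.span_le.2 (Set.image_subset_iff.2 hmode)) hK

lemma modulation_mem_hardySpace {k : ℤ} (hk : 0 ≤ k) {f : Hsp} (hf : f ∈ hardySpace) :
    modulation k f ∈ hardySpace := by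
  refine hardySpace_le (K := hardySpace.comap (modulation k).toLinearMap)
    (analyticPoly.isClosed_topologicalClosure.preimage (modulation k).continuous)
    (fun j hj => ?_) hf
  rw [Submodule.mem_comap, LinearIsometry.coe_toLinearMap, modulation_fourierModeLp]
  exact analyticPoly_le_hardySpace (fourierModeLp_mem_analyticPoly (add_nonneg hk hj))

lemma inner_modulation_fourierModeLp_zero_eq_zero {k : ℤ} (hk : 0 < k) {f : Hsp}
    (hf : f ∈ hardySpace) : inner ℂ (modulation k f) (fourierModeLp 0) = 0 := by
  let K := (ℂ ∙ fourierModeLp 0)ᗮ.comap (modulation k).toLinearMap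
  have hK : IsClosed (K : Set Hsp) :=
    (Submodule.isClosed_orthogonal _).preimage (modulation k).continuous
  refine Submodule.mem_orthogonal_singleton_iff_inner_left.1
    (hardySpace_le (K := K) hK (fun j hj => ?_) hf)
  rw [Submodule.mem_comap, Submodule.mem_orthogonal_singleton_iff_inner_left,
    LinearIsometry.coe_toLinearMap, modulation_fourierModeLp, inner_fourierModeLp]
  exact integral_fourierMode_of_ne_zero (by lia)

lemma modulation_mem_analyticPoly {n : ℕ} {g : Hsp} (hg : g ∈ trigPoly n) :
    modulation n g ∈ analyticPoly := by
  have hle : trigPoly n ≤ analyticPoly.comap (modulation n).toLinearMap := by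
    refine Submodule.span_le.2 (Set.image_subset_iff.2 fun j hj => ?_)
    change modulation n (fourierModeLp j) ∈ analyticPoly
    rw [modulation_fourierModeLp]
    exact fourierModeLp_mem_analyticPoly (neg_le_iff_add_nonneg'.1 (abs_le.1 hj).1)
  exact hle hg

lemma eventually_modulation_neg_mem_trigPoly {g : Hsp} (hg : g ∈ analyticPoly) :
    ∀ᶠ n : ℕ in atTop, modulation (-n) g ∈ trigPoly n := by
  induction hg using Submodule.span_induction with
  | mem x hx =>
    obtain ⟨k, hk, rfl⟩ := hx
    filter_upwards [eventually_ge_atTop k.toNat] with n hn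
    rw [modulation_fourierModeLp]
    have hk0 : 0 ≤ k := hk
    exact fourierModeLp_mem_trigPoly (abs_le.2 (by lia))
  | zero => simp only [map_zero, zero_mem, eventually_true]
  | add x y _ _ hx hy =>
    filter_upwards [hx, hy] with n hxn hyn
    rw [map_add]
    exact add_mem hxn hyn
  | smul c x _ hx =>
    filter_upwards [hx] with n hxn
    rw [map_smul]
    exact Submodule.smul_mem _ _ hxn

lemma finiteDimensional_trigPoly (n : ℕ) : FiniteDimensional ℂ (trigPoly n) :=
  .span_of_finite ℂ (((Set.finite_Icc (-(n : ℤ)) n).subset fun _ hk => abs_le.1 hk).image _)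

end HardySpace

section MultiplicationOperator

/-- `M` is the operator of multiplication by the real symbol `m` on `L²(-π, π)`. -/
def IsMulOp (m : ℝ → ℝ) (M : Hsp →L[ℂ] Hsp) : Prop :=
  ∀ f : Hsp, M f =ᵐ[mπ] fun x => (m x : ℂ) * f x

namespace IsMulOp

variable {m : ℝ → ℝ} {M : Hsp →L[ℂ] Hsp}

lemma sub_smul_id (hM : IsMulOp m M) (l : ℝ) :
    IsMulOp (fun x => m x - l) (M - (l : ℂ) • ContinuousLinearMap.id ℂ Hsp) := by
  intro f
  change ⇑(M f - (l : ℂ) • f) =ᵐ[mπ] _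
  filter_upwards [hM f, Lp.coeFn_sub (M f) ((l : ℂ) • f), Lp.coeFn_smul (l : ℂ) f]
    with x hx hsub hsmul
  rw [hsub, Pi.sub_apply, hsmul, Pi.smul_apply, hx, smul_eq_mul, Complex.ofReal_sub, sub_mul]

lemma isSymmetric (hM : IsMulOp m M) : (M : Hsp →ₗ[ℂ] Hsp).IsSymmetric := by
  intro f g
  rw [L2.inner_def, L2.inner_def]
  refine integral_congr_ae ?_
  filter_upwards [hM f, hM g] with x hf hg
  rw [ContinuousLinearMap.coe_coe, hf, hg, RCLike.inner_apply, RCLike.inner_apply, map_mul,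
    Complex.conj_ofReal]
  ring

lemma involutive (hM : IsMulOp m M) (hm : ∀ x, m x ^ 2 = 1) : Function.Involutive M := by
  intro f
  refine Lp.ext ?_
  filter_upwards [hM (M f), hM f] with x hMf hf
  rw [hMf, hf, ← mul_assoc, ← Complex.ofReal_mul, ← sq, hm, Complex.ofReal_one, one_mul]

lemma modulation_comm (hM : IsMulOp m M) (k : ℤ) (f : Hsp) :
    modulation k (M f) = M (modulation k f) := by
  refine Lp.ext ?_
  filter_upwards [coeFn_modulation k (M f), hM f, hM (modulation k f), coeFn_modulation k f]
    with x hkM hf hMk hk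
  rw [hkM, hf, hMk, hk, mul_left_comm]

lemma inner_modulation_integrand_ae_eq (hM : IsMulOp m M) (k : ℤ) (f : Hsp) :
    (fun x => inner ℂ (modulation k f x) (M f x)) =ᵐ[mπ]
      fun x => fourierMode (-k) x * ((m x * ‖f x‖ ^ 2 : ℝ) : ℂ) := by
  filter_upwards [hM f, coeFn_modulation k f] with x hf hk
  rw [hf, hk, RCLike.inner_apply, map_mul, conj_fourierMode, Complex.ofReal_mul,
    ← Complex.normSq_eq_norm_sq, Complex.normSq_eq_conj_mul_self]
  ring

lemma integrable_mul_norm_sq (hM : IsMulOp m M) (f : Hsp) :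
    Integrable (fun x => m x * ‖f x‖ ^ 2) mπ := by
  have h := (L2.integrable_inner (𝕜 := ℂ) (modulation 0 f) (M f)).congr
    (hM.inner_modulation_integrand_ae_eq 0 f)
  simp only [neg_zero, fourierMode_zero, one_mul] at h
  exact h.re

lemma inner_modulation_apply (hM : IsMulOp m M) (k : ℤ) (f : Hsp) :
    inner ℂ (modulation k f) (M f) =
      ∫ x, fourierMode (-k) x * ((m x * ‖f x‖ ^ 2 : ℝ) : ℂ) ∂mπ := by
  rw [L2.inner_def]
  exact integral_congr_ae (hM.inner_modulation_integrand_ae_eq k f)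

lemma apply_eq_zero_of_inner_modulation_eq_zero (hM : IsMulOp m M)
    (hnonpos : ∃ᵐ x ∂mπ, m x ≤ 0) (hnonneg : ∃ᵐ x ∂mπ, 0 ≤ m x) {f : Hsp}
    (hf : ∀ k : ℤ, 0 < k → inner ℂ (modulation k f) (M f) = 0) : M f = 0 := by
  obtain ⟨c, hc⟩ := exists_ae_eq_const_of_forall_integral_fourierMode_neg_mul_eq_zero
    (hM.integrable_mul_norm_sq f) fun k hk => hM.inner_modulation_apply k f ▸ hf k hk
  have hc0 : c = 0 := by
    obtain ⟨x, hmx, hx⟩ := (hnonpos.and_eventually hc).exists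
    obtain ⟨y, hmy, hy⟩ := (hnonneg.and_eventually hc).exists
    refine le_antisymm ?_ ?_
    · exact hx.symm.trans_le (mul_nonpos_of_nonpos_of_nonneg hmx (sq_nonneg _))
    · exact (mul_nonneg hmy (sq_nonneg _)).trans_eq hy
  rw [Lp.eq_zero_iff_ae_eq_zero]
  filter_upwards [hM f, hc] with x hx hcx
  rw [hc0, mul_eq_zero, sq_eq_zero_iff, norm_eq_zero] at hcx
  rw [hx, Pi.zero_apply, mul_eq_zero, Complex.ofReal_eq_zero]
  exact hcx

end IsMulOp

end MultiplicationOperator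

section Toeplitz

/-- The Toeplitz operator on `H²` induced by `M`: apply `M`, then project back onto `H²`. -/
def toeplitz (M : Hsp →L[ℂ] Hsp) : hardySpace →L[ℂ] hardySpace :=
  hardySpace.orthogonalProjectionOnto ∘L M ∘L hardySpace.subtypeL

lemma inner_toeplitz (M : Hsp →L[ℂ] Hsp) (f g : hardySpace) :
    inner ℂ f (toeplitz M g) = inner ℂ (f : Hsp) (M g) :=
  Submodule.inner_orthogonalProjectionOnto_eq_of_mem_left f (M g)

lemma isSelfAdjoint_toeplitz {M : Hsp →L[ℂ] Hsp} (hM : (M : Hsp →ₗ[ℂ] Hsp).IsSymmetric) :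
    IsSelfAdjoint (toeplitz M) := by
  refine ContinuousLinearMap.isSelfAdjoint_iff_isSymmetric.2 fun f g => ?_
  calc inner ℂ (toeplitz M f) g
      = inner ℂ (M f) (g : Hsp) :=
        Submodule.inner_orthogonalProjectionOnto_eq_of_mem_right g (M f)
    _ = inner ℂ (f : Hsp) (M g) := hM _ _
    _ = inner ℂ f (toeplitz M g) := (inner_toeplitz M f g).symm

variable {m : ℝ → ℝ} {M : Hsp →L[ℂ] Hsp}

theorem not_surjective_toeplitz (hM : IsMulOp m M) (hnonpos : ∃ᵐ x ∂mπ, m x ≤ 0)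
    (hnonneg : ∃ᵐ x ∂mπ, 0 ≤ m x) : ¬ Function.Surjective (toeplitz M) := by
  intro hsurj
  have hmem : fourierModeLp 0 ∈ hardySpace :=
    analyticPoly_le_hardySpace (fourierModeLp_mem_analyticPoly le_rfl)
  obtain ⟨f, hf⟩ := hsurj ⟨fourierModeLp 0, hmem⟩
  have hinner : ∀ g ∈ hardySpace, inner ℂ g (M f) = inner ℂ g (fourierModeLp 0) := by
    intro g hg
    rw [← inner_toeplitz M ⟨g, hg⟩ f, hf]
    rfl
  have hMf : M f = 0 :=
    hM.apply_eq_zero_of_inner_modulation_eq_zero hnonpos hnonneg fun k hk => by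
      rw [hinner _ (modulation_mem_hardySpace hk.le f.2),
        inner_modulation_fourierModeLp_zero_eq_zero hk f.2]
  have hself := hinner _ hmem
  rw [hMf, inner_zero_right] at hself
  exact fourierModeLp_zero_ne_zero (inner_self_eq_zero.1 hself.symm)

lemma exists_mem_analyticPoly_norm_orthogonalProjectionOnto_lt (hM : IsMulOp m M)
    (hnonpos : ∃ᵐ x ∂mπ, m x ≤ 0) (hnonneg : ∃ᵐ x ∂mπ, 0 ≤ m x) {ε : ℝ} (hε : 0 < ε) :
    ∃ g ∈ analyticPoly, ‖hardySpace.orthogonalProjectionOnto (M g)‖ < ε * ‖g‖ := by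
  obtain ⟨f, hf⟩ := exists_norm_apply_lt_of_not_surjective (isSelfAdjoint_toeplitz hM.isSymmetric)
    (not_surjective_toeplitz hM hnonpos hnonneg) hε
  have hopen : IsOpen {g : Hsp | ‖hardySpace.orthogonalProjectionOnto (M g)‖ < ε * ‖g‖} :=
    isOpen_lt (by fun_prop) (by fun_prop)
  obtain ⟨g, hlt, hg⟩ := mem_closure_iff.1 f.2 _ hopen hf
  exact ⟨g, hg, hlt⟩

variable {P : ℕ → Hsp →L[ℂ] Hsp}

theorem eventually_exists_hasEigenvalue_compress_near (hM : IsMulOp m M)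
    (hP : ∀ n, IsStarProjection (P n))
    (hPrange : ∀ n, LinearMap.range (P n : Hsp →ₗ[ℂ] Hsp) = trigPoly n)
    {l : ℝ} (hle : ∃ᵐ x ∂mπ, m x ≤ l) (hge : ∃ᵐ x ∂mπ, l ≤ m x) {ε : ℝ} (hε : 0 < ε) :
    ∀ᶠ n in atTop, ∃ μ : ℝ,
      Module.End.HasEigenvalue (compress (P n) (M : Hsp →ₗ[ℂ] Hsp)) (μ : ℂ) ∧ |μ - l| < ε := by
  let B := M - (l : ℂ) • ContinuousLinearMap.id ℂ Hsp
  have hB : IsMulOp (fun x => m x - l) B := hM.sub_smul_id l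
  obtain ⟨g, hg, hlt⟩ := exists_mem_analyticPoly_norm_orthogonalProjectionOnto_lt hB
    (hle.mono fun x => sub_nonpos.2) (hge.mono fun x => sub_nonneg.2) hε
  filter_upwards [eventually_modulation_neg_mem_trigPoly hg] with n hn
  have : FiniteDimensional ℂ (LinearMap.range (P n : Hsp →ₗ[ℂ] Hsp)) :=
    hPrange n ▸ finiteDimensional_trigPoly n
  have hfix : P n (modulation (-n) g) = modulation (-n) g :=
    apply_eq_self_of_mem_range (hP n).isIdempotentElem (hPrange n ▸ hn)
  refine exists_hasEigenvalue_abs_sub_lt (isSymmetric_compress hM.isSymmetric (hP n))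
    (v := ⟨modulation (-n) g, hPrange n ▸ hn⟩) ?_
  calc ‖P n (M (modulation (-n) g)) - (l : ℂ) • modulation (-n) g‖
      = ‖P n (B (modulation (-n) g))‖ := by
        simp only [B, sub_apply, smul_apply, ContinuousLinearMap.id_apply, map_sub, map_smul, hfix]
    _ ≤ ‖hardySpace.orthogonalProjectionOnto (modulation n (B (modulation (-n) g)))‖ :=
        norm_apply_le_norm_orthogonalProjectionOnto (hP n) (modulation n)
          (fun v => analyticPoly_le_hardySpace
            (modulation_mem_analyticPoly (hPrange n ▸ LinearMap.mem_range_self _ v))) _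
    _ = ‖hardySpace.orthogonalProjectionOnto (B g)‖ := by
        rw [hB.modulation_comm, modulation_modulation, add_neg_cancel, modulation_zero_apply]
    _ < ε * ‖g‖ := hlt
    _ = ε * ‖modulation (-n) g‖ := by rw [LinearIsometry.norm_map]

lemma nontrivial_trigPoly (n : ℕ) : Nontrivial (trigPoly n) :=
  nontrivial_of_ne ⟨fourierModeLp 0, fourierModeLp_mem_trigPoly (by simp)⟩ 0
    fun h => fourierModeLp_zero_ne_zero (congrArg Subtype.val h)

theorem exists_tendsto_hasEigenvalue_compress (hM : IsMulOp m M)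
    (hP : ∀ n, IsStarProjection (P n))
    (hPrange : ∀ n, LinearMap.range (P n : Hsp →ₗ[ℂ] Hsp) = trigPoly n)
    {l : ℝ} (hle : ∃ᵐ x ∂mπ, m x ≤ l) (hge : ∃ᵐ x ∂mπ, l ≤ m x) :
    ∃ μ : ℕ → ℝ,
      (∀ n, Module.End.HasEigenvalue (compress (P n) (M : Hsp →ₗ[ℂ] Hsp)) (μ n : ℂ)) ∧
        Tendsto μ atTop (𝓝 l) := by
  refine exists_seq_mem_tendsto (fun n => ?_) fun ε hε =>
    eventually_exists_hasEigenvalue_compress_near hM hP hPrange hle hge hε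
  have : FiniteDimensional ℂ (LinearMap.range (P n : Hsp →ₗ[ℂ] Hsp)) :=
    hPrange n ▸ finiteDimensional_trigPoly n
  have : Nontrivial (LinearMap.range (P n : Hsp →ₗ[ℂ] Hsp)) := hPrange n ▸ nontrivial_trigPoly n
  exact ⟨_, (isSymmetric_compress hM.isSymmetric (hP n)).hasEigenvalue_eigenvalues rfl
    ⟨0, Module.finrank_pos⟩⟩

end Toeplitz

theorem limiting_set_of_multiplication_operator_eq_unit_circle_general
    (E : Set ℝ) (hEpos : 0 < mπ E) (hEcpos : 0 < mπ Eᶜ)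
    (M : Hsp →L[ℂ] Hsp)
    (hM : ∀ f : Hsp, ⇑(M f) =ᵐ[mπ] fun x => (if x ∈ E then (1 : ℂ) else -1) * f x)
    (e : ℤ → Hsp)
    (he : ∀ k : ℤ, ⇑(e k) =ᵐ[mπ] fun x => Complex.exp (Complex.I * k * x))
    (P : ℕ → Hsp →L[ℂ] Hsp)
    (hPsa : ∀ n, IsSelfAdjoint (P n))
    (hPidem : ∀ n, IsIdempotentElem (P n))
    (hPrange : ∀ n, LinearMap.range (P n : Hsp →ₗ[ℂ] Hsp) =
      Submodule.span ℂ (e '' {k : ℤ | |k| ≤ (n : ℤ)})) :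
    {z : ℂ | ∃ zs : ℕ → ℂ, (∀ n, zs n ∈ spec2 (M : Hsp →ₗ[ℂ] Hsp) (P n)) ∧
      Tendsto zs atTop (𝓝 z)} = {z : ℂ | ‖z‖ = 1} := by
  obtain rfl : e = fourierModeLp :=
    funext fun k => Lp.ext ((he k).trans (coeFn_fourierModeLp k).symm)
  have hMul : IsMulOp (fun x => if x ∈ E then 1 else -1) M := fun f =>
    (hM f).trans (.of_eq (funext fun x => by by_cases hx : x ∈ E <;> simp [hx]))
  have hinv : Function.Involutive M := hMul.involutive fun x => by split_ifs <;> norm_num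
  have hP n : IsStarProjection (P n) := ⟨hPidem n, hPsa n⟩
  have (n : ℕ) : FiniteDimensional ℂ (LinearMap.range (P n : Hsp →ₗ[ℂ] Hsp)) :=
    hPrange n ▸ finiteDimensional_trigPoly n
  refine Set.ext fun z => ⟨fun ⟨zs, hzs, hlim⟩ =>
    norm_eq_one_of_tendsto_mem_spec2 hMul.isSymmetric hinv hP hzs hlim, fun hz => ?_⟩
  have hre : |z.re| ≤ 1 := hz ▸ Complex.abs_re_le_norm z
  have hle : ∃ᵐ x ∂mπ, (if x ∈ E then 1 else -1) ≤ z.re :=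
    (frequently_ae_mem_iff.2 hEcpos.ne').mono fun x hx => by
      simpa only [if_neg hx] using (abs_le.1 hre).1
  have hge : ∃ᵐ x ∂mπ, z.re ≤ if x ∈ E then 1 else -1 :=
    (frequently_ae_mem_iff.2 hEpos.ne').mono fun x hx => by
      simpa only [if_pos hx] using (abs_le.1 hre).2
  obtain ⟨μ, hμ, hlim⟩ := exists_tendsto_hasEigenvalue_compress hMul hP hPrange hle hge
  exact exists_tendsto_mem_spec2_of_tendsto_hasEigenvalue hMul.isSymmetric hinv hP hz hμ hlim

/-- For the multiplication operator `M` by the symbol `m = 1 on E, -1 on Eᶜ`, where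
`E ⊊ (-π, π]` is a finite union of semi-open intervals (with `E` and `Eᶜ` of positive
measure), and for the subspaces `L_n = span{e^{-inx}, …, e^{inx}}`, the uniform limiting
set `Λ(M)` of the second order spectra is the whole unit circle. -/
theorem limiting_set_of_multiplication_operator_eq_unit_circle
    (E : Set ℝ) (s : Finset (ℝ × ℝ)) (hE : E = ⋃ p ∈ s, Set.Ioc p.1 p.2)
    (hEsub : E ⊆ Set.Ioc (-Real.pi) Real.pi)
    (hEpos : 0 < volume E)
    (hEcpos : 0 < volume (Set.Ioc (-Real.pi) Real.pi \ E))
    -- `M` is multiplication by the symbol `m`: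
    (M : Hsp →L[ℂ] Hsp)
    (hM : ∀ f : Hsp, ⇑(M f) =ᵐ[mπ] fun x => (if x ∈ E then (1 : ℂ) else -1) * f x)
    -- `e k` is the exponential `e^{ikx}` and `P n` the orthogonal projection onto `L_n`:
    (e : ℤ → Hsp)
    (he : ∀ k : ℤ, ⇑(e k) =ᵐ[mπ] fun x => Complex.exp (Complex.I * k * x))
    (P : ℕ → Hsp →L[ℂ] Hsp)
    (hPsa : ∀ n, IsSelfAdjoint (P n))
    (hPidem : ∀ n, IsIdempotentElem (P n))
    (hPrange : ∀ n, LinearMap.range (P n : Hsp →ₗ[ℂ] Hsp) =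
      Submodule.span ℂ (e '' {k : ℤ | |k| ≤ (n : ℤ)})) :
    {z : ℂ | ∃ zs : ℕ → ℂ, (∀ n, zs n ∈ spec2 (M : Hsp →ₗ[ℂ] Hsp) (P n)) ∧
      Tendsto zs atTop (𝓝 z)} = {z : ℂ | ‖z‖ = 1} := by
  refine limiting_set_of_multiplication_operator_eq_unit_circle_general E ?_ ?_
    M hM e he P hPsa hPidem hPrange
  · rwa [mπ, Measure.restrict_apply' measurableSet_Ioc, Set.inter_eq_left.2 hEsub]
  · rwa [mπ, Measure.restrict_apply' measurableSet_Ioc, Set.inter_comm, ← Set.sdiff_eq]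

end
end
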